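/- arXiv:2004.05677 — 2 statements merged into one kernel-verified Lean document; each statement's English description precedes it below -/
import Mathlib

section
/- Let p be an odd prime, n ≥ 1, q = p^(2^n), and G = PGL₂(F_q). If x ∈ G is an involution not lying in the image of SL₂(F_q) in G, then every maximal subgroup of G containing x is isomorphic either to the dihedral group of order 2(q−1) or to the dihedral group of order 2(q+1). -/
open Matrix

/-- `PGL₂(F)`: the projective general linear group, i.e. the quotient of `GL₂(F)`
by its center. -/
abbrev ProjectiveGL2 (F : Type) [Field F] : Type :=
  Matrix.GeneralLinearGroup (Fin 2) F ⧸ Subgroup.center (Matrix.GeneralLinearGroup (Fin 2) F)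

/-- The image of the natural map `SL₂(F) → PGL₂(F)`: the socle of `PGL₂(F)`,
isomorphic to `PSL₂(F)`. -/
def socleSL2 (F : Type) [Field F] : Subgroup (ProjectiveGL2 F) :=
  ((QuotientGroup.mk' (Subgroup.center (Matrix.GeneralLinearGroup (Fin 2) F))).comp
    Matrix.SpecialLinearGroup.toGL).range

/-!
Let `H ≤ GL₂(F)` be the preimage of a proper subgroup containing the outer involution. Commuting is
a transitive relation off the scalars, so the non-scalar elements of `H` are partitioned by the
conjugates of the tori `C(g)`, and the class of `g` has density `(1 - 1/d)/e` in `H`, where `d` is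
the order of `C(g)` modulo scalars and `e = [N(C(g)) : C(g)]`. As in Dickson's classification these
densities add up to almost `1`; counting separately in the index two subgroup of square determinants
leaves at most three classes. The extreme case is `e = 2` for all three, with
`1/d₁ + 1/d₂ + 1/d₃ = 1 + 2/N`, and always some semisimple `g` has `C(g)` normal in `H`. Then `H`
conjugates the traceless part `V` of `g` to multiples of itself, so its image in `PGL₂(F)`
centralizes the involution defined by `V`, whose centralizer is dihedral over a cyclic torus of
order `q - 1` or `q + 1`.

The shape `q = p ^ 2 ^ n` excludes the other possibilities: every nonsquare generates `F` as a
ring, so that a Borel-type normalizer together with the outer involution generates everything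
(no parabolic or subfield groups), while `-1` and `2` are squares, which rules out elements of
order `4` outside `PSL₂(F)` (no octahedral groups).
-/

theorem two_mul_eq_of_one_div_add_one_div_add_one_div {a b c N : ℕ} (ha : 2 ∣ a) (hb : 2 ∣ b)
    (ha2 : 2 ≤ a) (hb2 : 2 ≤ b) (hc2 : 2 ≤ c) (ha4 : a ≠ 4) (hb4 : b ≠ 4) (hN : 0 < N)
    (h : (1 / a + 1 / b + 1 / c : ℚ) = 1 + 2 / N) : 2 * a = N ∨ 2 * b = N ∨ 2 * c = N := by
  wlog hab : a ≤ b generalizing a b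
  · have := this hb ha hb2 ha2 hb4 ha4 (by rw [← h]; ring) (by omega)
    tauto
  have hN' : (0 : ℚ) < 2 / N := by positivity
  have one_div_le : ∀ m n : ℕ, 0 < m → m ≤ n → (1 : ℚ) / n ≤ 1 / m := fun m n hm hmn ↦
    one_div_le_one_div_of_le (by exact_mod_cast hm) (by exact_mod_cast hmn)
  have eq_of : ∀ n : ℕ, 2 ≤ n → (1 : ℚ) / n = 2 / N → 2 * n = N := fun n hn hnN ↦ by
    rw [div_eq_div_iff (by positivity) (by positivity)] at hnN
    exact_mod_cast hnN.symm.trans (one_mul _)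
  have hc_le := one_div_le 2 c two_pos hc2
  have ha_eq : a = 2 := by
    by_contra hne
    have ha_le := one_div_le 6 a (by norm_num) (by omega)
    have hb_le := one_div_le 6 b (by norm_num) (by omega)
    norm_num at h ha_le hb_le hc_le
    linarith
  obtain rfl | hb_ne := eq_or_ne b 2
  · exact .inr (.inr (eq_of c hc2 (by norm_num [ha_eq] at h ⊢; linarith)))
  have hc_eq : c = 2 := by
    by_contra hne
    have hb_le := one_div_le 6 b (by norm_num) (by omega)
    have hc_le := one_div_le 3 c (by norm_num) (by omega)
    norm_num [ha_eq] at h hb_le hc_le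
    linarith
  exact .inr (.inl (eq_of b hb2 (by norm_num [ha_eq, hc_eq] at h ⊢; linarith)))

section CommutativeTransitive

variable {K : Type*} [Group K] {Z : Subgroup K} {a b c g h : K}

/-- `Z` is central and commuting is a transitive relation on the complement of `Z`; equivalently,
the centralizers of the elements outside `Z` are abelian and meet pairwise in `Z` or coincide. -/
structure IsCommTransitiveModulo (Z : Subgroup K) : Prop where
  le_center : Z ≤ Subgroup.center K
  trans : ∀ ⦃a b c : K⦄, b ∉ Z → Commute a b → Commute b c → Commute a c

/-- The index of `Z` in the centralizer of `g`. -/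
noncomputable def torusOrder (Z : Subgroup K) (g : K) : ℕ :=
  Z.relIndex (Subgroup.centralizer {g})

/-- The index of the centralizer of `g` in its own normalizer. For a semisimple `g` this is the
order of the Weyl group of the torus `centralizer {g}`. -/
noncomputable def weylOrder (g : K) : ℕ :=
  (Subgroup.centralizer {g}).relIndex
    (Subgroup.normalizer (Subgroup.centralizer {g} : Set K))

theorem mem_centralizer_singleton_iff_commute : h ∈ Subgroup.centralizer {g} ↔ Commute g h :=
  Subgroup.mem_centralizer_singleton_iff.trans eq_comm

theorem self_mem_centralizer_singleton (g : K) : g ∈ Subgroup.centralizer {g} :=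
  mem_centralizer_singleton_iff_commute.2 (Commute.refl g)

theorem commute_conj_left_iff : Commute (h * a * h⁻¹) b ↔ Commute a (h⁻¹ * b * h) := by
  rw [← Commute.conj_iff h⁻¹]
  simp [mul_assoc]

theorem weylOrder_pos [Finite K] (g : K) : 0 < weylOrder g :=
  Nat.pos_of_ne_zero Subgroup.index_ne_zero_of_finite

theorem two_le_torusOrder [Finite K] (hg : g ∉ Z) : 2 ≤ torusOrder Z g := by
  have h0 : torusOrder Z g ≠ 0 := Subgroup.index_ne_zero_of_finite
  have h1 : torusOrder Z g ≠ 1 := fun h ↦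
    hg (Subgroup.relIndex_eq_one.1 h (self_mem_centralizer_singleton g))
  omega

theorem one_div_torusOrder_le [Finite K] (hg : g ∉ Z) : (1 / torusOrder Z g : ℚ) ≤ 1 / 2 :=
  one_div_le_one_div_of_le two_pos (by exact_mod_cast two_le_torusOrder hg)

namespace IsCommTransitiveModulo

variable (hZ : IsCommTransitiveModulo Z)
include hZ

theorem normal : Z.Normal :=
  ⟨fun z hz h ↦ by
    rwa [Subgroup.mem_center_iff.1 (hZ.le_center hz) h, mul_inv_cancel_right]⟩

theorem conj_mem_iff : h * g * h⁻¹ ∈ Z ↔ g ∈ Z :=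
  have := hZ.normal
  ⟨fun hg ↦ by simpa [mul_assoc] using this.conj_mem _ hg h⁻¹, fun hg ↦ this.conj_mem g hg h⟩

theorem le_centralizer (g : K) : Z ≤ Subgroup.centralizer {g} :=
  hZ.le_center.trans (Subgroup.center_le_centralizer _)

theorem commute_iff_of_commute (ha : a ∉ Z) (hb : b ∉ Z) (hab : Commute a b) :
    Commute a c ↔ Commute b c :=
  ⟨hZ.trans ha hab.symm, hZ.trans hb hab⟩

theorem mem_normalizer_centralizer_iff (hg : g ∉ Z) :
    h ∈ Subgroup.normalizer (Subgroup.centralizer {g} : Set K) ↔ Commute (h * g * h⁻¹) g := by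
  simp only [Subgroup.mem_normalizer_iff, mem_centralizer_singleton_iff_commute]
  refine ⟨fun hh ↦ ((hh g).1 (Commute.refl g)).symm, fun hh y ↦ ?_⟩
  rw [← Commute.conj_iff h]
  exact hZ.commute_iff_of_commute (mt hZ.conj_mem_iff.1 hg) hg hh

theorem torusOrder_mul_weylOrder_mul_index (g : K) :
    torusOrder Z g * weylOrder g *
      (Subgroup.normalizer (Subgroup.centralizer {g} : Set K)).index = Z.index := by
  rw [torusOrder, weylOrder, Subgroup.relIndex_mul_relIndex _ _ _ (hZ.le_centralizer g)
    Subgroup.le_normalizer, Subgroup.relIndex_mul_index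
    ((hZ.le_centralizer g).trans Subgroup.le_normalizer)]

theorem torusOrder_mul_weylOrder_le [Finite K] (g : K) :
    torusOrder Z g * weylOrder g ≤ Z.index := by
  rw [← hZ.torusOrder_mul_weylOrder_mul_index g]
  exact Nat.le_mul_of_pos_right _ (Nat.pos_of_ne_zero Subgroup.index_ne_zero_of_finite)

theorem normalizer_eq_top_of_index_eq [Finite K] (h : torusOrder Z g * weylOrder g = Z.index) :
    Subgroup.normalizer (Subgroup.centralizer {g} : Set K) = ⊤ := by
  have hmul := hZ.torusOrder_mul_weylOrder_mul_index g
  rw [h] at hmul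
  exact Subgroup.index_eq_one.1
    ((Nat.mul_eq_left Subgroup.index_ne_zero_of_finite).1 hmul)

theorem pow_torusOrder_mem (hh : h ∈ Subgroup.centralizer {g}) : h ^ torusOrder Z g ∈ Z := by
  have := hZ.normal.subgroupOf (Subgroup.centralizer {g})
  exact (Z.subgroupOf _).pow_index_mem ⟨h, hh⟩

theorem one_div_index_le [Finite K] (g : K) :
    (1 / Z.index : ℚ) ≤ 1 / torusOrder Z g / weylOrder g := by
  have hpos : 0 < torusOrder Z g * weylOrder g :=
    Nat.mul_pos (Nat.pos_of_ne_zero Subgroup.index_ne_zero_of_finite) (weylOrder_pos g)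
  rw [div_div]
  exact one_div_le_one_div_of_le (by exact_mod_cast hpos)
    (by exact_mod_cast hZ.torusOrder_mul_weylOrder_le g)

end IsCommTransitiveModulo

variable [Fintype K]

open Classical in
/-- The elements outside `Z` which commute with a conjugate of `g`. When commuting is transitive
modulo `Z`, these sets are the classes of an equivalence relation on the complement of `Z`. -/
noncomputable def commClass (Z : Subgroup K) (g : K) : Finset K :=
  {y | y ∉ Z ∧ ∃ h, Commute (h * g * h⁻¹) y}

theorem mem_commClass {y : K} : y ∈ commClass Z g ↔ y ∉ Z ∧ ∃ h, Commute (h * g * h⁻¹) y := by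
  simp [commClass]

theorem mem_commClass_of_commute (hb : b ∉ Z) (hab : Commute a b) : b ∈ commClass Z a :=
  mem_commClass.2 ⟨hb, 1, by simpa⟩

theorem mem_commClass_symm (ha : a ∉ Z) (hb : b ∈ commClass Z a) : a ∈ commClass Z b := by
  obtain ⟨-, h, hab⟩ := mem_commClass.1 hb
  refine mem_commClass.2 ⟨ha, h⁻¹, ?_⟩
  simpa using (commute_conj_left_iff.1 hab).symm

theorem exists_mem_centralizer_notMem_of_mem_commClass {L : Subgroup K} [L.Normal]
    (hb : b ∈ commClass Z a) (haL : a ∉ L) : ∃ y ∈ Subgroup.centralizer {b}, y ∉ L := by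
  obtain ⟨-, h, hab⟩ := mem_commClass.1 hb
  refine ⟨h * a * h⁻¹, mem_centralizer_singleton_iff_commute.2 hab.symm, fun hL ↦ haL ?_⟩
  simpa [mul_assoc] using ‹L.Normal›.conj_mem _ hL h⁻¹

open Classical in
theorem card_centralizer_conj_sdiff (L : Subgroup K) [L.Normal] (g h : K) :
    Finset.card {y | Commute (h * g * h⁻¹) y ∧ y ∉ L} =
      Finset.card {y | y ∈ Subgroup.centralizer {g} ∧ y ∉ L} := by
  simp only [mem_centralizer_singleton_iff_commute]
  have hL : ∀ k y : K, k * y * k⁻¹ ∈ L → y ∈ L := fun k y hy ↦ by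
    simpa [mul_assoc] using ‹L.Normal›.conj_mem _ hy k⁻¹
  refine Finset.card_bij' (fun y _ ↦ h⁻¹ * y * h) (fun y _ ↦ h * y * h⁻¹) ?_ ?_
    (by simp [mul_assoc]) (by simp [mul_assoc])
  · intro y hy
    rw [Finset.mem_filter_univ] at hy ⊢
    exact ⟨commute_conj_left_iff.1 hy.1, fun hyL ↦ hy.2 (hL h⁻¹ y (by simpa using hyL))⟩
  · intro y hy
    rw [Finset.mem_filter_univ] at hy ⊢
    exact ⟨(Commute.conj_iff h).2 hy.1, mt (hL h y) hy.2⟩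

omit [Fintype K] in
theorem card_inf_mul_relIndex (L H : Subgroup K) :
    Nat.card ↥(L ⊓ H) * L.relIndex H = Nat.card H := by
  rw [← Subgroup.relIndex_bot_left, ← Subgroup.inf_relIndex_right L,
    Subgroup.relIndex_mul_relIndex _ _ _ bot_le inf_le_right, Subgroup.relIndex_bot_left]

open Classical in
theorem card_filter_mem_notMem (L H : Subgroup K) :
    (Finset.card {y | y ∈ H ∧ y ∉ L} : ℚ) = Nat.card H * (1 - 1 / L.relIndex H) := by
  have hinf : (Nat.card ↥(L ⊓ H) * L.relIndex H : ℚ) = Nat.card H := by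
    exact_mod_cast card_inf_mul_relIndex L H
  have hsplit : (Nat.card ↥(L ⊓ H) + Finset.card {y | y ∈ H ∧ y ∉ L} : ℚ) = Nat.card H := by
    norm_cast
    simp only [Nat.card_eq_fintype_card, Fintype.card_subtype]
    rw [← Finset.card_filter_add_card_filter_not (s := {y | y ∈ H}) (· ∈ L),
      Finset.filter_filter, Finset.filter_filter]
    simp only [Subgroup.mem_inf, and_comm]
  have hindex : (L.relIndex H : ℚ) ≠ 0 := by exact_mod_cast Subgroup.index_ne_zero_of_finite
  rw [eq_sub_of_add_eq' hsplit, ← hinf]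
  field_simp

namespace IsCommTransitiveModulo

variable (hZ : IsCommTransitiveModulo Z)
include hZ

theorem mem_commClass_trans (hb : b ∈ commClass Z a) (hc : c ∈ commClass Z b) :
    c ∈ commClass Z a := by
  obtain ⟨hbZ, h, hab⟩ := mem_commClass.1 hb
  obtain ⟨hcZ, k, hbc⟩ := mem_commClass.1 hc
  refine mem_commClass.2 ⟨hcZ, k * h, hZ.trans (mt hZ.conj_mem_iff.1 hbZ) ?_ hbc⟩
  rw [← Commute.conj_iff k] at hab
  simpa [mul_assoc] using hab

theorem disjoint_commClass (hb : b ∉ Z) (hab : b ∉ commClass Z a) :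
    Disjoint (commClass Z a) (commClass Z b) := by
  refine Finset.disjoint_left.2 fun y hya hyb ↦ hab ?_
  exact hZ.mem_commClass_trans hya (mem_commClass_symm hb hyb)

theorem commClass_eq (ha : a ∉ Z) (hb : b ∈ commClass Z a) : commClass Z b = commClass Z a :=
  Finset.ext fun _ ↦ ⟨hZ.mem_commClass_trans hb,
    hZ.mem_commClass_trans (mem_commClass_symm ha hb)⟩

open Classical in
theorem card_commute_conj (hg : g ∉ Z) {y : K} (hy : y ∈ commClass Z g) :
    Finset.card {h : K | Commute (h * g * h⁻¹) y} =
      Nat.card (Subgroup.normalizer (Subgroup.centralizer {g} : Set K)) := by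
  obtain ⟨hyZ, k, hk⟩ := mem_commClass.1 hy
  rw [Nat.card_eq_fintype_card, Fintype.card_subtype]
  refine Finset.card_bij' (fun h _ ↦ k⁻¹ * h) (fun h _ ↦ k * h) ?_ ?_ (by simp) (by simp)
  · intro h hh
    have := hZ.trans hyZ (by simpa using hh) hk.symm
    rw [Finset.mem_filter_univ, hZ.mem_normalizer_centralizer_iff hg, ← Commute.conj_iff k]
    simpa [mul_assoc] using this
  · intro h hh
    rw [Finset.mem_filter_univ, hZ.mem_normalizer_centralizer_iff hg, ← Commute.conj_iff k] at hh
    refine (Finset.mem_filter_univ _).2 (hZ.trans (mt hZ.conj_mem_iff.1 hg) ?_ hk)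
    simpa [mul_assoc] using hh

open Classical in
theorem card_commClass_filter_mul_card_normalizer {L : Subgroup K} [L.Normal] (hZL : Z ≤ L)
    (hg : g ∉ Z) :
    Finset.card {y ∈ commClass Z g | y ∉ L} *
        Nat.card (Subgroup.normalizer (Subgroup.centralizer {g} : Set K)) =
      Fintype.card K * Finset.card {y | y ∈ Subgroup.centralizer {g} ∧ y ∉ L} := by
  have hbelow : ∀ y ∈ ({y ∈ commClass Z g | y ∉ L} : Finset K),
      Finset.card (Finset.univ.bipartiteBelow (fun h y ↦ Commute (h * g * h⁻¹) y) y) =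
        Nat.card (Subgroup.normalizer (Subgroup.centralizer {g} : Set K)) := fun y hy ↦
    hZ.card_commute_conj hg (Finset.mem_filter.1 hy).1
  have habove : ∀ h ∈ (Finset.univ : Finset K),
      Finset.card (Finset.bipartiteAbove (fun h y ↦ Commute (h * g * h⁻¹) y)
        {y ∈ commClass Z g | y ∉ L} h) =
      Finset.card {y | y ∈ Subgroup.centralizer {g} ∧ y ∉ L} := fun h _ ↦ by
    rw [← card_centralizer_conj_sdiff L g h]
    congr 1
    ext y
    simp only [Finset.mem_bipartiteAbove, Finset.mem_filter, mem_commClass, Finset.mem_univ,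
      true_and]
    exact ⟨fun hy ↦ ⟨hy.2, hy.1.2⟩, fun hy ↦ ⟨⟨⟨fun hyZ ↦ hy.2 (hZL hyZ), h, hy.1⟩, hy.2⟩, hy.1⟩⟩
  rw [← Finset.card_univ]
  exact (Finset.card_mul_eq_card_mul _ habove hbelow).symm

open Classical in
theorem dens_commClass_filter {L : Subgroup K} [L.Normal] (hZL : Z ≤ L) (hg : g ∉ Z) :
    (Finset.dens {y ∈ commClass Z g | y ∉ L} : ℚ) =
      (1 - 1 / L.relIndex (Subgroup.centralizer {g})) / weylOrder g := by
  have hcount := hZ.card_commClass_filter_mul_card_normalizer hZL hg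
  set C := Subgroup.centralizer {g}
  have hC : Nat.card C * weylOrder g = Nat.card (Subgroup.normalizer (C : Set K)) := by
    rw [weylOrder, ← card_inf_mul_relIndex C (Subgroup.normalizer (C : Set K)),
      inf_of_le_left Subgroup.le_normalizer]
  have hK0 : (Fintype.card K : ℚ) ≠ 0 := by simp
  have hC0 : (Nat.card C : ℚ) ≠ 0 := by simp
  have he0 : (weylOrder g : ℚ) ≠ 0 := by exact_mod_cast (weylOrder_pos g).ne'
  rw [← hC] at hcount
  qify at hcount
  rw [card_filter_mem_notMem L C] at hcount
  rw [Finset.nnratCast_dens, div_eq_div_iff hK0 he0]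
  refine mul_left_cancel₀ hC0 ?_
  linear_combination hcount

theorem dens_commClass (hg : g ∉ Z) :
    ((commClass Z g).dens : ℚ) = (1 - 1 / torusOrder Z g) / weylOrder g := by
  classical
  have := hZ.normal
  rw [torusOrder, ← hZ.dens_commClass_filter le_rfl hg,
    Finset.filter_true_of_mem fun y hy ↦ (mem_commClass.1 hy).1]

theorem one_div_two_mul_weylOrder_le_dens_commClass (hg : g ∉ Z) :
    1 / (2 * weylOrder g : ℚ) ≤ (commClass Z g).dens := by
  rw [hZ.dens_commClass hg, ← div_div]
  gcongr
  linarith [one_div_torusOrder_le hg]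

section SmallUnion

variable {S : K → Prop} {K₀ : Subgroup K} {R : Finset K}
  (hS : ∀ g ∉ Z, S g → weylOrder g ≤ 2) (hRZ : ∀ g ∈ R, g ∉ Z)
  (hR : ∀ g ∈ R, commClass Z g ⊆ R) (hdens : (R.dens : ℚ) < 1 / 2)
include hRZ hR hdens

theorem weylOrder_ne_one_of_mem_of_dens_lt (hg : g ∈ R) : weylOrder g ≠ 1 := by
  intro he
  have hle : ((commClass Z g).dens : ℚ) ≤ R.dens := by
    exact_mod_cast Finset.dens_le_dens (hR g hg)
  have := hZ.one_div_two_mul_weylOrder_le_dens_commClass (hRZ g hg)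
  norm_num [he] at this
  linarith

omit hRZ hdens in
theorem dens_commClass_add_dens_commClass_le (ha : a ∈ R) (hb : b ∈ R) (hbZ : b ∉ Z)
    (hab : b ∉ commClass Z a) :
    ((commClass Z a).dens + (commClass Z b).dens : ℚ) ≤ R.dens := by
  classical
  have := Finset.dens_le_dens (Finset.union_subset (hR a ha) (hR b hb))
  rw [Finset.dens_union_of_disjoint (hZ.disjoint_commClass hbZ hab)] at this
  exact_mod_cast this

include hS

theorem weylOrder_eq_two_of_mem_of_dens_lt (hg : g ∈ R) (hSg : S g) : weylOrder g = 2 := by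
  have h1 := hZ.weylOrder_ne_one_of_mem_of_dens_lt hRZ hR hdens hg
  have h2 := hS g (hRZ g hg) hSg
  have h0 := weylOrder_pos g
  omega

theorem weylOrder_ne_torusOrder_of_dens_lt (ha : a ∈ R) (ha3 : 3 ≤ torusOrder Z a) (hb : b ∈ R)
    (hSb : S b) : weylOrder a ≠ torusOrder Z b := by
  intro hab
  have haZ := hRZ a ha
  have hbZ := hRZ b hb
  have hdens_a := hZ.dens_commClass haZ
  have hdens_b := hZ.dens_commClass hbZ
  rw [hZ.weylOrder_eq_two_of_mem_of_dens_lt hS hRZ hR hdens hb hSb, ← hab] at hdens_b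
  have hk : (0 : ℚ) < weylOrder a := by exact_mod_cast weylOrder_pos a
  have hd : (1 : ℚ) / torusOrder Z a ≤ 1 / 3 :=
    one_div_le_one_div_of_le three_pos (by exact_mod_cast ha3)
  have hd0 : (0 : ℚ) < 1 / torusOrder Z a := by
    have := two_le_torusOrder haZ
    positivity
  by_cases hclass : b ∈ commClass Z a
  · rw [hZ.commClass_eq haZ hclass, hdens_a, Nat.cast_ofNat] at hdens_b
    have heq : (weylOrder a : ℚ) = 3 - 2 * (1 / torusOrder Z a) := by
      field_simp at hdens_b ⊢
      linarith
    have hlt : weylOrder a < 3 := by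
      exact_mod_cast (by linarith : (weylOrder a : ℚ) < 3)
    have hgt : 2 < weylOrder a := by
      exact_mod_cast (by linarith : (2 : ℚ) < weylOrder a)
    omega
  · have hsum := hZ.dens_commClass_add_dens_commClass_le hR ha hb hbZ hclass
    have hinv : (1 : ℚ) / 2 ≤
        (1 - 1 / torusOrder Z a) / weylOrder a + (1 - 1 / weylOrder a) / 2 := by
      rw [← sub_nonneg]
      have : (1 - 1 / torusOrder Z a) / weylOrder a + (1 - 1 / weylOrder a) / 2 - (1 : ℚ) / 2 =
          (1 / 2 - 1 / torusOrder Z a) / weylOrder a := by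
        field_simp
        ring
      rw [this]
      exact div_nonneg (by linarith) hk.le
    rw [hdens_a, hdens_b, Nat.cast_ofNat] at hsum
    linarith

theorem eq_empty_or_eq_commClass_of_dens_lt
    (hU : ∀ g ∉ Z, ¬ S g → 3 ≤ torusOrder Z g ∧ (weylOrder g = 1 ∨
      ∃ g' ∉ Z, Subgroup.centralizer {g'} ≤ K₀ ∧ S g' ∧ weylOrder g = torusOrder Z g'))
    (hinner : ∀ g ∉ Z, Subgroup.centralizer {g} ≤ K₀ → g ∈ R) :
    R = ∅ ∨ ∃ g ∈ R, S g ∧ weylOrder g = 2 ∧ R = commClass Z g := by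
  have hRS : ∀ g ∈ R, S g := fun g hg ↦ by
    by_contra hSg
    obtain ⟨hd, he | ⟨g', hg', hC, hSg', he⟩⟩ := hU g (hRZ g hg) hSg
    · exact hZ.weylOrder_ne_one_of_mem_of_dens_lt hRZ hR hdens hg he
    · exact hZ.weylOrder_ne_torusOrder_of_dens_lt hS hRZ hR hdens hg hd (hinner g' hg' hC) hSg' he
  have hweyl : ∀ g ∈ R, weylOrder g = 2 := fun g hg ↦
    hZ.weylOrder_eq_two_of_mem_of_dens_lt hS hRZ hR hdens hg (hRS g hg)
  have hquarter : ∀ g ∈ R, (1 : ℚ) / 4 ≤ (commClass Z g).dens := fun g hg ↦ by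
    have := hZ.one_div_two_mul_weylOrder_le_dens_commClass (hRZ g hg)
    norm_num [hweyl g hg] at this
    linarith
  refine R.eq_empty_or_nonempty.imp_right fun ⟨g, hg⟩ ↦ ⟨g, hg, hRS g hg, hweyl g hg, ?_⟩
  refine (hR g hg).antisymm' fun y hy ↦ by_contra fun hyg ↦ ?_
  have := hZ.dens_commClass_add_dens_commClass_le hR hg hy (hRZ y hy) hyg
  linarith [hquarter g hg, hquarter y hy]

end SmallUnion

end IsCommTransitiveModulo

section IndexTwo

variable {K₀ : Subgroup K} (hK₀ : K₀.index = 2)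

omit [Fintype K] in
include hK₀ in
theorem relIndex_eq_two_of_not_le {H : Subgroup K} (hH : ¬ H ≤ K₀) : K₀.relIndex H = 2 := by
  have := Subgroup.normal_of_index_eq_two hK₀
  have hdvd := Subgroup.relIndex_dvd_index_of_normal K₀ H
  rw [hK₀] at hdvd
  exact ((Nat.dvd_prime Nat.prime_two).1 hdvd).resolve_left (mt Subgroup.relIndex_eq_one.1 hH)

open Classical in
theorem dens_filter_notMem (L : Subgroup K) : (Finset.dens {y | y ∉ L} : ℚ) = 1 - 1 / L.index := by
  have := card_filter_mem_notMem L ⊤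
  rw [Subgroup.card_top, Subgroup.relIndex_top_right] at this
  simp only [Subgroup.mem_top, true_and] at this
  rw [Finset.nnratCast_dens, this, Nat.card_eq_fintype_card, mul_div_cancel_left₀ _ (by simp)]

open Classical in
/-- The elements outside `Z` whose centralizer meets the complement of `K₀`. -/
noncomputable def outerPart (Z K₀ : Subgroup K) : Finset K :=
  {y | y ∉ Z ∧ ¬ Subgroup.centralizer {y} ≤ K₀}

open Classical in
/-- The elements outside `Z` whose centralizer lies in `K₀`. -/
noncomputable def innerPart (Z K₀ : Subgroup K) : Finset K :=
  {y | y ∉ Z ∧ Subgroup.centralizer {y} ≤ K₀}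

theorem mem_outerPart : g ∈ outerPart Z K₀ ↔ g ∉ Z ∧ ¬ Subgroup.centralizer {g} ≤ K₀ := by
  simp [outerPart]

theorem mem_innerPart : g ∈ innerPart Z K₀ ↔ g ∉ Z ∧ Subgroup.centralizer {g} ≤ K₀ := by
  simp [innerPart]

theorem dens_innerPart (Z K₀ : Subgroup K) :
    ((innerPart Z K₀).dens : ℚ) = 1 - 1 / Z.index - (outerPart Z K₀).dens := by
  classical
  rw [← dens_filter_notMem, eq_sub_iff_add_eq,
    ← Finset.dens_filter_add_dens_filter_not_eq_dens
      (s := {y | y ∉ Z}) fun y ↦ Subgroup.centralizer {y} ≤ K₀]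
  simp [innerPart, outerPart, Finset.filter_filter]

theorem mem_outerPart_iff_exists [K₀.Normal] :
    g ∈ outerPart Z K₀ ↔ ∃ u ∉ K₀, g ∈ commClass Z u := by
  rw [mem_outerPart]
  refine ⟨fun ⟨hg, hC⟩ ↦ ?_, fun ⟨u, hu, hg⟩ ↦ ⟨(mem_commClass.1 hg).1, fun hC ↦ ?_⟩⟩
  · obtain ⟨u, huC, hu⟩ := SetLike.not_le_iff_exists.1 hC
    exact ⟨u, hu, mem_commClass_of_commute hg (mem_centralizer_singleton_iff_commute.1 huC).symm⟩
  · obtain ⟨y, hyC, hy⟩ := exists_mem_centralizer_notMem_of_mem_commClass hg hu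
    exact hy (hC hyC)

include hK₀ in
open Classical in
theorem mem_of_dens_filter_notMem {U : Finset K}
    (hU : (Finset.dens {y ∈ U | y ∉ K₀} : ℚ) = 1 / 2) (hg : g ∉ K₀) : g ∈ U := by
  have hsub : ({y ∈ U | y ∉ K₀} : Finset K) ⊆ ({y | y ∉ K₀} : Finset K) :=
    Finset.filter_subset_filter _ (Finset.subset_univ U)
  have huniv : (Finset.dens {y | y ∉ K₀} : ℚ) = 1 / 2 := by
    rw [dens_filter_notMem, hK₀]
    norm_num
  obtain heq | hss := hsub.eq_or_ssubset
  · exact (Finset.mem_filter.1 (heq ▸ (Finset.mem_filter_univ g).2 hg)).1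
  · have hlt : (Finset.dens {y ∈ U | y ∉ K₀} : ℚ) < Finset.dens {y | y ∉ K₀} := by
      exact_mod_cast Finset.dens_lt_dens hss
    exact absurd (hU.trans huniv.symm) hlt.ne

namespace IsCommTransitiveModulo

variable (hZ : IsCommTransitiveModulo Z)
include hZ

theorem commClass_subset_innerPart [K₀.Normal] (hg : g ∈ innerPart Z K₀) :
    commClass Z g ⊆ innerPart Z K₀ := fun y hy ↦ by
  obtain ⟨hgZ, hgC⟩ := mem_innerPart.1 hg
  refine mem_innerPart.2 ⟨(mem_commClass.1 hy).1, by_contra fun hC ↦ ?_⟩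
  obtain ⟨u, hu, hyu⟩ := mem_outerPart_iff_exists.1 (mem_outerPart.2 ⟨(mem_commClass.1 hy).1, hC⟩)
  have hgu := hZ.mem_commClass_trans hyu (mem_commClass_symm hgZ hy)
  exact (mem_outerPart.1 (mem_outerPart_iff_exists.2 ⟨u, hu, hgu⟩)).2 hgC

omit [Fintype K] in
include hK₀ in
theorem two_dvd_torusOrder (hZK : Z ≤ K₀) (hg : g ∉ K₀) : 2 ∣ torusOrder Z g := by
  have hC : K₀.relIndex (Subgroup.centralizer {g}) = 2 :=
    relIndex_eq_two_of_not_le hK₀ fun h ↦ hg (h (self_mem_centralizer_singleton g))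
  rw [torusOrder, ← Subgroup.relIndex_mul_relIndex Z (K₀ ⊓ Subgroup.centralizer {g}) _
    (le_inf hZK (hZ.le_centralizer g)) inf_le_right, Subgroup.inf_relIndex_right, hC]
  exact dvd_mul_left _ _

include hK₀ in
open Classical in
theorem dens_commClass_filter_notMem (hZK : Z ≤ K₀) (hg : g ∉ K₀) :
    (Finset.dens {y ∈ commClass Z g | y ∉ K₀} : ℚ) = 1 / 2 / weylOrder g := by
  have := Subgroup.normal_of_index_eq_two hK₀
  rw [hZ.dens_commClass_filter hZK (mt (@hZK g) hg),
    relIndex_eq_two_of_not_le hK₀ fun h ↦ hg (h (self_mem_centralizer_singleton g))]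
  norm_num

include hK₀ in
theorem outerPart_eq_commClass (hZK : Z ≤ K₀) (hg : g ∉ K₀) (he : weylOrder g = 1) :
    outerPart Z K₀ = commClass Z g := by
  classical
  have := Subgroup.normal_of_index_eq_two hK₀
  have hdens := hZ.dens_commClass_filter_notMem hK₀ hZK hg
  rw [he, Nat.cast_one, div_one] at hdens
  refine Finset.Subset.antisymm (fun y hy ↦ ?_)
    fun y hy ↦ mem_outerPart_iff_exists.2 ⟨g, hg, hy⟩
  obtain ⟨u, hu, hyu⟩ := mem_outerPart_iff_exists.1 hy
  exact hZ.mem_commClass_trans (mem_of_dens_filter_notMem hK₀ hdens hu) hyu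

include hK₀ in
theorem outerPart_eq_union [DecidableEq K] (hZK : Z ≤ K₀) (ha : a ∉ K₀) (hb : b ∉ K₀)
    (hea : weylOrder a = 2) (heb : weylOrder b = 2) (hab : b ∉ commClass Z a) :
    outerPart Z K₀ = commClass Z a ∪ commClass Z b := by
  classical
  have := Subgroup.normal_of_index_eq_two hK₀
  have hda := hZ.dens_commClass_filter_notMem hK₀ hZK ha
  have hdb := hZ.dens_commClass_filter_notMem hK₀ hZK hb
  have hdisj := hZ.disjoint_commClass (mt (@hZK b) hb) hab
  have hdens : (Finset.dens {y ∈ commClass Z a ∪ commClass Z b | y ∉ K₀} : ℚ) = 1 / 2 := by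
    rw [Finset.filter_union, Finset.dens_union_of_disjoint (Finset.disjoint_filter_filter hdisj),
      NNRat.cast_add, hda, hdb, hea, heb]
    norm_num
  ext y
  rw [Finset.mem_union]
  refine ⟨fun hy ↦ ?_, Or.rec (fun hy ↦ mem_outerPart_iff_exists.2 ⟨a, ha, hy⟩)
    fun hy ↦ mem_outerPart_iff_exists.2 ⟨b, hb, hy⟩⟩
  obtain ⟨u, hu, hyu⟩ := mem_outerPart_iff_exists.1 hy
  exact (Finset.mem_union.1 (mem_of_dens_filter_notMem hK₀ hdens hu)).imp
    (hZ.mem_commClass_trans · hyu) (hZ.mem_commClass_trans · hyu)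

variable {S : K → Prop} (hZK : Z ≤ K₀) (hS : ∀ g ∉ Z, S g → weylOrder g ≤ 2)
  (hSK : ∀ g ∉ K₀, S g)
  (hU : ∀ g ∉ Z, ¬ S g → 3 ≤ torusOrder Z g ∧ (weylOrder g = 1 ∨
    ∃ g' ∉ Z, Subgroup.centralizer {g'} ≤ K₀ ∧ S g' ∧ weylOrder g = torusOrder Z g'))
  (h4 : ∀ g ∉ K₀, torusOrder Z g ≠ 4)
include hK₀ hS hU

theorem innerPart_eq_empty_or_eq_commClass (hdens : ((innerPart Z K₀).dens : ℚ) < 1 / 2) :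
    innerPart Z K₀ = ∅ ∨
      ∃ g ∉ Z, S g ∧ weylOrder g = 2 ∧ innerPart Z K₀ = commClass Z g := by
  have := Subgroup.normal_of_index_eq_two hK₀
  exact (hZ.eq_empty_or_eq_commClass_of_dens_lt hS (fun g hg ↦ (mem_innerPart.1 hg).1)
    (fun g hg ↦ hZ.commClass_subset_innerPart hg) hdens hU
    fun g hg hC ↦ mem_innerPart.2 ⟨hg, hC⟩).imp_right
    fun ⟨g, hg, h⟩ ↦ ⟨g, (mem_innerPart.1 hg).1, h⟩

include hZK hSK

omit [Fintype K] in
theorem exists_normalizer_centralizer_eq_top_of_weylOrder_eq_one [Finite K] (ha : a ∉ K₀)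
    (he : weylOrder a = 1) :
    ∃ g ∉ Z, S g ∧ Subgroup.normalizer (Subgroup.centralizer {g} : Set K) = ⊤ := by
  have := Fintype.ofFinite K
  have haZ := mt (@hZK a) ha
  have hdvd := hZ.two_dvd_torusOrder hK₀ hZK ha
  have h2 := two_le_torusOrder haZ
  have hN : (0 : ℚ) < 1 / Z.index := by
    have := Nat.pos_of_ne_zero (Z.index_ne_zero_of_finite)
    positivity
  have hdens : ((innerPart Z K₀).dens : ℚ) = 1 / torusOrder Z a - 1 / Z.index := by
    rw [dens_innerPart, hZ.outerPart_eq_commClass hK₀ hZK ha he, hZ.dens_commClass haZ, he]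
    ring
  have hle := one_div_torusOrder_le haZ
  obtain hempty | ⟨g, hgZ, hSg, heg, hg⟩ :=
    hZ.innerPart_eq_empty_or_eq_commClass hK₀ hS hU (by linarith)
  · refine ⟨a, haZ, hSK a ha, hZ.normalizer_eq_top_of_index_eq ?_⟩
    rw [hempty, Finset.dens_empty, NNRat.cast_zero, eq_comm, sub_eq_zero] at hdens
    rw [one_div, one_div, _root_.inv_inj] at hdens
    rw [he, mul_one]
    exact_mod_cast hdens
  · refine ⟨g, hgZ, hSg, hZ.normalizer_eq_top_of_index_eq ?_⟩
    rw [hg, hZ.dens_commClass hgZ, heg, Nat.cast_ofNat] at hdens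
    have hlt : torusOrder Z a < 4 := by
      by_contra! h4le
      have : (1 : ℚ) / torusOrder Z a ≤ 1 / 4 :=
        one_div_le_one_div_of_le (by norm_num) (by exact_mod_cast h4le)
      have := one_div_torusOrder_le hgZ
      linarith
    rw [show torusOrder Z a = 2 by omega] at hdens
    have hinv : (1 : ℚ) / (torusOrder Z g * 2) = 1 / Z.index := by
      rw [← div_div]
      push_cast at hdens
      linarith
    rw [one_div, one_div, _root_.inv_inj] at hinv
    rw [heg]
    exact_mod_cast hinv

include h4

theorem exists_normalizer_centralizer_eq_top_of_weylOrder_eq_two (ha : a ∉ K₀) (hb : b ∉ K₀)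
    (hea : weylOrder a = 2) (heb : weylOrder b = 2) (hab : b ∉ commClass Z a) :
    ∃ g ∉ Z, S g ∧ Subgroup.normalizer (Subgroup.centralizer {g} : Set K) = ⊤ := by
  classical
  have haZ := mt (@hZK a) ha
  have hbZ := mt (@hZK b) hb
  have hN := Nat.pos_of_ne_zero (Z.index_ne_zero_of_finite)
  have hN' : (0 : ℚ) < 1 / Z.index := by positivity
  have hdens : ((innerPart Z K₀).dens : ℚ) =
      (1 / torusOrder Z a + 1 / torusOrder Z b) / 2 - 1 / Z.index := by
    rw [dens_innerPart, hZ.outerPart_eq_union hK₀ hZK ha hb hea heb hab,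
      Finset.dens_union_of_disjoint (hZ.disjoint_commClass hbZ hab), NNRat.cast_add,
      hZ.dens_commClass haZ, hZ.dens_commClass hbZ, hea, heb, Nat.cast_ofNat]
    ring
  have ha_le := one_div_torusOrder_le haZ
  have hb_le := one_div_torusOrder_le hbZ
  obtain hempty | ⟨g, hgZ, hSg, heg, hg⟩ :=
    hZ.innerPart_eq_empty_or_eq_commClass hK₀ hS hU (by linarith)
  · have ha_index := hZ.one_div_index_le a
    have hb_index := hZ.one_div_index_le b
    rw [hea, Nat.cast_ofNat] at ha_index
    rw [heb, Nat.cast_ofNat] at hb_index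
    rw [hempty, Finset.dens_empty, NNRat.cast_zero] at hdens
    linarith
  · rw [hg, hZ.dens_commClass hgZ, heg, Nat.cast_ofNat] at hdens
    have eq_top : ∀ x, weylOrder x = 2 → 2 * torusOrder Z x = Z.index →
        Subgroup.normalizer (Subgroup.centralizer {x} : Set K) = ⊤ := fun x hx h ↦
      hZ.normalizer_eq_top_of_index_eq (by rw [hx, mul_comm, h])
    obtain h | h | h := two_mul_eq_of_one_div_add_one_div_add_one_div
      (hZ.two_dvd_torusOrder hK₀ hZK ha) (hZ.two_dvd_torusOrder hK₀ hZK hb)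
      (two_le_torusOrder haZ) (two_le_torusOrder hbZ) (two_le_torusOrder hgZ) (h4 a ha) (h4 b hb) hN
      (by rw [← mul_one_div 2]; linarith)
    · exact ⟨a, haZ, hSK a ha, eq_top a hea h⟩
    · exact ⟨b, hbZ, hSK b hb, eq_top b heb h⟩
    · exact ⟨g, hgZ, hSg, eq_top g heg h⟩

omit [Fintype K] in
theorem exists_normalizer_centralizer_eq_top [Finite K] :
    ∃ g ∉ Z, S g ∧ Subgroup.normalizer (Subgroup.centralizer {g} : Set K) = ⊤ := by
  have := Fintype.ofFinite K
  by_cases h1 : ∃ a ∉ K₀, weylOrder a = 1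
  · obtain ⟨a, ha, he⟩ := h1
    exact hZ.exists_normalizer_centralizer_eq_top_of_weylOrder_eq_one hK₀ hZK hS hSK hU ha he
  push Not at h1
  have he : ∀ a ∉ K₀, weylOrder a = 2 := fun a ha ↦ by
    have := hS a (mt (@hZK a) ha) (hSK a ha)
    have := weylOrder_pos a
    have := h1 a ha
    omega
  obtain ⟨a, ha⟩ : ∃ a, a ∉ K₀ := by
    by_contra! h
    rw [(Subgroup.eq_top_iff' K₀).2 h, Subgroup.index_top] at hK₀
    omega
  obtain ⟨b, hb, hab⟩ : ∃ b ∉ K₀, b ∉ commClass Z a := by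
    by_contra! h
    classical
    have hdens := hZ.dens_commClass_filter_notMem hK₀ hZK ha
    have hsub : ({y | y ∉ K₀} : Finset K) ⊆ ({y ∈ commClass Z a | y ∉ K₀} : Finset K) :=
      fun y hy ↦ Finset.mem_filter.2 ⟨h y (by simpa using hy), by simpa using hy⟩
    have hle : (Finset.dens {y | y ∉ K₀} : ℚ) ≤ Finset.dens {y ∈ commClass Z a | y ∉ K₀} := by
      exact_mod_cast Finset.dens_le_dens hsub
    rw [dens_filter_notMem, hK₀, hdens, he a ha] at hle
    norm_num at hle
  exact hZ.exists_normalizer_centralizer_eq_top_of_weylOrder_eq_two hK₀ hZK hS hSK hU h4 ha hb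
    (he a ha) (he b hb) hab

end IsCommTransitiveModulo

end IndexTwo

end CommutativeTransitive

section MatrixFinTwo

variable {F : Type*} [Field F] {A B C V W : Matrix (Fin 2) (Fin 2) F}

theorem mem_range_scalar_iff :
    A ∈ Set.range (scalar (Fin 2)) ↔ A 0 1 = 0 ∧ A 1 0 = 0 ∧ A 0 0 = A 1 1 := by
  refine ⟨?_, fun ⟨h01, h10, h⟩ ↦ ⟨A 0 0, ?_⟩⟩
  · rintro ⟨a, rfl⟩
    simp
  · ext i j
    fin_cases i <;> fin_cases j <;> simp [h01, h10, h]

theorem exists_eq_smul_one_add_smul (hA : A ∉ Set.range (scalar (Fin 2))) (hAB : Commute A B) :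
    ∃ α β : F, B = α • 1 + β • A := by
  have h := hAB.eq
  rw [← Matrix.ext_iff] at h
  simp only [Fin.forall_fin_two, mul_apply, Fin.sum_univ_two] at h
  obtain ⟨⟨h00, h01⟩, h10, h11⟩ := h
  rw [mem_range_scalar_iff] at hA
  by_cases h0 : A 0 1 = 0
  · by_cases h1 : A 1 0 = 0
    · have hd : A 0 0 - A 1 1 ≠ 0 := sub_ne_zero.2 fun h ↦ hA ⟨h0, h1, h⟩
      refine ⟨B 0 0 - (B 0 0 - B 1 1) / (A 0 0 - A 1 1) * A 0 0,
        (B 0 0 - B 1 1) / (A 0 0 - A 1 1), ?_⟩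
      ext i j
      fin_cases i <;> fin_cases j <;> simp <;> field_simp <;> grind
    · refine ⟨B 0 0 - B 1 0 / A 1 0 * A 0 0, B 1 0 / A 1 0, ?_⟩
      ext i j
      fin_cases i <;> fin_cases j <;> simp <;> field_simp <;> grind
  · refine ⟨B 0 0 - B 0 1 / A 0 1 * A 0 0, B 0 1 / A 0 1, ?_⟩
    ext i j
    fin_cases i <;> fin_cases j <;> simp <;> field_simp <;> grind

theorem commute_trans (hB : B ∉ Set.range (scalar (Fin 2))) (hAB : Commute A B)
    (hBC : Commute B C) : Commute A C := by
  obtain ⟨α, β, rfl⟩ := exists_eq_smul_one_add_smul hB hBC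
  exact ((Commute.one_right A).smul_right α).add_right (hAB.smul_right β)

theorem mul_self_eq_trace_smul_sub_det_smul (A : Matrix (Fin 2) (Fin 2) F) :
    A * A = A.trace • A - A.det • 1 := by
  ext i j
  fin_cases i <;> fin_cases j <;>
    simp [mul_apply, trace_fin_two, det_fin_two] <;> ring

theorem trace_eq_zero_of_mul_self_mem_range_scalar (hA : A ∉ Set.range (scalar (Fin 2)))
    (h : A * A ∈ Set.range (scalar (Fin 2))) : A.trace = 0 := by
  rw [mul_self_eq_trace_smul_sub_det_smul] at h
  contrapose! hA
  rw [mem_range_scalar_iff] at h ⊢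
  simpa [hA, sub_eq_zero] using h

theorem discr_smul_one_add_smul (A : Matrix (Fin 2) (Fin 2) F) (α β : F) :
    (α • 1 + β • A).discr = β ^ 2 * A.discr := by
  simp [discr_fin_two, trace_fin_two, det_fin_two]
  ring

theorem det_smul_one_add_smul (A : Matrix (Fin 2) (Fin 2) F) (α β : F) :
    (α • 1 + β • A).det = α ^ 2 + α * β * A.trace + β ^ 2 * A.det := by
  simp [trace_fin_two, det_fin_two]
  ring

theorem trace_sq_eq_two_mul_det (hA : A ∉ Set.range (scalar (Fin 2))) (htr : A.trace ≠ 0)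
    (h : A * A * (A * A) ∈ Set.range (scalar (Fin 2))) : A.trace ^ 2 = 2 * A.det := by
  have hsq : A * A ∉ Set.range (scalar (Fin 2)) :=
    fun h ↦ htr (trace_eq_zero_of_mul_self_mem_range_scalar hA h)
  have := trace_eq_zero_of_mul_self_mem_range_scalar hsq h
  rw [mul_self_eq_trace_smul_sub_det_smul] at this
  simp only [trace_sub, trace_smul, trace_one, smul_eq_mul, Fintype.card_fin] at this
  linear_combination this

theorem notMem_range_scalar_of_mul_self_eq_zero (hV : V ≠ 0) (hVV : V * V = 0) :
    V ∉ Set.range (scalar (Fin 2)) := by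
  rintro ⟨a, rfl⟩
  rw [← map_mul, ← map_zero (scalar (Fin 2)), scalar_inj, mul_self_eq_zero] at hVV
  exact hV (by rw [hVV, map_zero])

theorem exists_eq_smul_of_mul_eq_zero (hV : V ≠ 0) (hVV : V * V = 0) (hVW : V * W = 0)
    (hWV : W * V = 0) : ∃ l : F, W = l • V := by
  obtain ⟨α, β, rfl⟩ := exists_eq_smul_one_add_smul
    (notMem_range_scalar_of_mul_self_eq_zero hV hVV) (hVW.trans hWV.symm)
  have : α • V = 0 := by simpa [mul_add, hVV] using hVW
  exact ⟨β, by simp [(smul_eq_zero.1 this).resolve_right hV]⟩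

theorem trace_eq_add_and_det_eq_mul (hV : V ≠ 0) {l m : F} (hlm : l ≠ m) (hl : A * V = l • V)
    (hm : V * A = m • V) : A.trace = l + m ∧ A.det = l * m := by
  have hA := mul_self_eq_trace_smul_sub_det_smul A
  have hroot_l : l * l - (A.trace * l - A.det) = 0 := by
    refine (smul_eq_zero.1 ?_).resolve_right hV
    have := congr($hA * V)
    simp only [sub_mul, Matrix.mul_assoc, hl, Matrix.mul_smul, smul_mul, Matrix.one_mul] at this
    rw [sub_smul, sub_smul, mul_smul, mul_smul, this, sub_self]
  have hroot_m : m * m - (A.trace * m - A.det) = 0 := by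
    refine (smul_eq_zero.1 ?_).resolve_right hV
    have := congr(V * $hA)
    simp only [mul_sub, ← Matrix.mul_assoc, hm, Matrix.mul_smul, smul_mul, Matrix.mul_one] at this
    rw [sub_smul, sub_smul, mul_smul, mul_smul, this, sub_self]
  have htr : A.trace = l + m :=
    mul_left_cancel₀ (sub_ne_zero.2 hlm) (by linear_combination hroot_m - hroot_l)
  exact ⟨htr, by linear_combination hroot_l + l * htr⟩

/-- Twice the traceless part `A - (tr A / 2) • 1` of a `2 × 2` matrix; the factor `2` makes its
square the discriminant of `A`. The elements normalizing the centralizer of `A` are those which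
conjugate `tracelessPart A` to a multiple of itself. -/
def tracelessPart (A : Matrix (Fin 2) (Fin 2) F) : Matrix (Fin 2) (Fin 2) F :=
  (2 : F) • A - A.trace • 1

theorem trace_tracelessPart (A : Matrix (Fin 2) (Fin 2) F) : (tracelessPart A).trace = 0 := by
  simp [tracelessPart, mul_comm]

theorem tracelessPart_mul_self (A : Matrix (Fin 2) (Fin 2) F) :
    tracelessPart A * tracelessPart A = A.discr • 1 := by
  rw [mul_self_eq_trace_smul_sub_det_smul, trace_tracelessPart, zero_smul, zero_sub, ← neg_smul]
  congr 1
  simp [tracelessPart, det_fin_two, discr_fin_two, trace_fin_two]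
  ring

theorem notMem_range_scalar_of_trace_eq_zero [NeZero (2 : F)] (hA : A ≠ 0) (htr : A.trace = 0) :
    A ∉ Set.range (scalar (Fin 2)) := by
  rintro ⟨a, rfl⟩
  have ha : a = 0 := by simpa [trace_fin_two, ← two_mul, two_ne_zero' F] using htr
  exact hA (by rw [ha, map_zero])

theorem tracelessPart_ne_zero [NeZero (2 : F)] (hA : A ∉ Set.range (scalar (Fin 2))) :
    tracelessPart A ≠ 0 := by
  contrapose! hA
  refine ⟨A.trace / 2, ?_⟩
  rw [scalar_apply, ← smul_one_eq_diagonal, ← smul_right_inj (two_ne_zero' F), smul_smul,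
    mul_div_cancel₀ _ (two_ne_zero' F), ← sub_eq_zero.1 hA]

theorem commute_tracelessPart_iff [NeZero (2 : F)] :
    Commute B (tracelessPart A) ↔ Commute B A := by
  simp [commute_iff_eq, tracelessPart, mul_sub, sub_mul, smul_right_inj (two_ne_zero' F)]

theorem tracelessPart_notMem_range_scalar [NeZero (2 : F)] (hA : A ∉ Set.range (scalar (Fin 2))) :
    tracelessPart A ∉ Set.range (scalar (Fin 2)) :=
  notMem_range_scalar_of_trace_eq_zero (tracelessPart_ne_zero hA) (trace_tracelessPart A)

theorem commute_iff_exists_tracelessPart_eq_smul [NeZero (2 : F)]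
    (hA : A ∉ Set.range (scalar (Fin 2))) :
    Commute B A ↔ ∃ c : F, tracelessPart B = c • tracelessPart A := by
  constructor
  · intro hBA
    obtain ⟨α, β, h⟩ := exists_eq_smul_one_add_smul (tracelessPart_notMem_range_scalar hA)
      (commute_tracelessPart_iff.2 (commute_tracelessPart_iff.2 hBA).symm)
    have htr := congr(trace $h)
    have hα : α = 0 := by
      simpa [trace_tracelessPart, two_ne_zero' F] using htr
    exact ⟨β, by rw [h, hα, zero_smul, zero_add]⟩
  · rintro ⟨c, hc⟩
    refine (commute_tracelessPart_iff.1 ?_).symm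
    rw [hc]
    exact (commute_tracelessPart_iff.2 (Commute.refl A)).smul_right c

theorem tracelessPart_conj (u : GL (Fin 2) F) (A : Matrix (Fin 2) (Fin 2) F) :
    tracelessPart (u.1 * A * u.inv) = u.1 * tracelessPart A * u.inv := by
  have htr : (u.1 * A * u.inv).trace = A.trace := by
    rw [trace_mul_cycle, u.inv_val, Matrix.one_mul]
  rw [tracelessPart, tracelessPart, htr, mul_sub, sub_mul, Matrix.mul_smul, smul_mul,
    Matrix.mul_smul, smul_mul, Matrix.mul_one, u.val_inv]

end MatrixFinTwo

theorem exists_monoidHom_units_mul_eq_smul {F A G : Type*} [Field F] [Ring A] [Algebra F A]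
    [Group G] (ι : G →* Aˣ) {v : A} (hv : v ≠ 0)
    (h : ∀ g, ∃ c : F, (ι g : A) * v = c • (v * ι g)) :
    ∃ χ : G →* Fˣ, ∀ g, (ι g : A) * v = (χ g : F) • (v * ι g) := by
  choose c hc using h
  have eq_of_smul_eq {g : G} {a b : F} (hab : a • (v * ι g) = b • (v * ι g)) : a = b :=
    smul_left_injective F ((Units.mul_left_eq_zero _).not.2 hv) hab
  let χ : G →* F :=
    { toFun := c
      map_one' := eq_of_smul_eq (g := 1) (by rw [← hc]; simp)
      map_mul' g h := eq_of_smul_eq (g := g * h) <| by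
        rw [← hc, map_mul, Units.val_mul, mul_assoc, hc h, mul_smul_comm, ← mul_assoc, hc g,
          smul_mul_assoc, smul_smul, mul_assoc, mul_comm (c h)] }
  exact ⟨χ.toHomUnits, hc⟩

section LinearSubgroup

variable {F : Type*} [Field F] {H : Subgroup (GL (Fin 2) F)} {g h : H}

/-- The scalar matrices in a subgroup `H` of `GL₂(F)`, as a subgroup of `H`. -/
abbrev scalarsIn (H : Subgroup (GL (Fin 2) F)) : Subgroup H :=
  (Subgroup.center (GL (Fin 2) F)).subgroupOf H

theorem mem_scalarsIn_iff : g ∈ scalarsIn H ↔ g.1.1 ∈ Set.range (scalar (Fin 2)) := by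
  rw [Subgroup.mem_subgroupOf, GeneralLinearGroup.mem_center_iff_val_mem_range_scalar]

theorem commute_val_iff : Commute g.1.1 h.1.1 ↔ Commute g h := by
  simp [commute_iff_eq, Subtype.ext_iff, Units.ext_iff]

theorem isCommTransitiveModulo_scalarsIn (H : Subgroup (GL (Fin 2) F)) :
    IsCommTransitiveModulo (scalarsIn H) where
  le_center _ hg := Subgroup.mem_center_iff.2 fun h ↦
    Subtype.ext (Subgroup.mem_center_iff.1 (Subgroup.mem_subgroupOf.1 hg) h)
  trans _ _ _ hb hab hbc := commute_val_iff.1 <|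
    commute_trans (mem_scalarsIn_iff.not.1 hb) (commute_val_iff.2 hab) (commute_val_iff.2 hbc)

theorem mem_normalizer_centralizer_iff_exists [NeZero (2 : F)] (hg : g ∉ scalarsIn H) :
    h ∈ Subgroup.normalizer (Subgroup.centralizer {g} : Set H) ↔
      ∃ c : F, h.1.1 * tracelessPart g.1.1 = c • (tracelessPart g.1.1 * h.1.1) := by
  rw [(isCommTransitiveModulo_scalarsIn H).mem_normalizer_centralizer_iff hg]
  have hconj : (h * g * h⁻¹).1.1 = h.1.1 * g.1.1 * h.1.inv := rfl
  rw [← commute_val_iff, hconj,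
    commute_iff_exists_tracelessPart_eq_smul (mem_scalarsIn_iff.not.1 hg), tracelessPart_conj]
  refine exists_congr fun c ↦ ⟨fun hc ↦ ?_, fun hc ↦ ?_⟩
  · rw [← smul_mul, ← hc, Matrix.mul_assoc, h.1.inv_val, Matrix.mul_one]
  · rw [hc, smul_mul, Matrix.mul_assoc, h.1.val_inv, Matrix.mul_one]

theorem exists_weylCharacter [NeZero (2 : F)] (hg : g ∉ scalarsIn H) :
    ∃ χ : Subgroup.normalizer (Subgroup.centralizer {g} : Set H) →* Fˣ,
      (∀ h, h.1.1.1 * tracelessPart g.1.1 = (χ h : F) • (tracelessPart g.1.1 * h.1.1.1)) ∧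
        ∀ h, χ h = 1 ↔ Commute h.1 g := by
  have hV := tracelessPart_ne_zero (mem_scalarsIn_iff.not.1 hg)
  obtain ⟨χ, hχ⟩ := exists_monoidHom_units_mul_eq_smul
    (H.subtype.comp (Subgroup.subtype _)) hV
    fun h ↦ (mem_normalizer_centralizer_iff_exists hg).1 h.2
  refine ⟨χ, hχ, fun h ↦ ?_⟩
  have hVh : tracelessPart g.1.1 * h.1.1.1 ≠ 0 := (Units.mul_left_eq_zero h.1.1).not.2 hV
  rw [← commute_val_iff, ← commute_tracelessPart_iff, commute_iff_eq, ← Units.val_eq_one]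
  refine ⟨fun h1 ↦ ?_, fun hc ↦ smul_left_injective F hVh ?_⟩
  · simpa [h1] using hχ h
  · simpa [hc] using (hχ h).symm

theorem weylOrder_eq_card_range
    (χ : Subgroup.normalizer (Subgroup.centralizer {g} : Set H) →* Fˣ)
    (hχ : ∀ h, χ h = 1 ↔ Commute h.1 g) : weylOrder g = Nat.card χ.range := by
  rw [← Subgroup.index_ker, weylOrder, Subgroup.relIndex]
  congr 1
  ext h
  rw [MonoidHom.mem_ker, hχ, Subgroup.mem_subgroupOf, mem_centralizer_singleton_iff_commute,
    commute_iff_eq, commute_iff_eq, eq_comm]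

theorem weylOrder_le_two [NeZero (2 : F)] (hg : g ∉ scalarsIn H) (hdisc : g.1.1.discr ≠ 0) :
    weylOrder g ≤ 2 := by
  obtain ⟨χ, hχ, hχ1⟩ := exists_weylCharacter hg
  rw [weylOrder_eq_card_range χ hχ1]
  refine (Subgroup.card_le_of_le ?_).trans (card_rootsOfUnity F 2)
  rintro _ ⟨h, rfl⟩
  have hh : g.1.1.discr • h.1.1.1 = (χ h ^ 2 : F) • g.1.1.discr • h.1.1.1 := by
    have := congr($(hχ h) * tracelessPart g.1.1)
    rw [smul_mul, Matrix.mul_assoc, Matrix.mul_assoc, hχ h, Matrix.mul_smul,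
      ← Matrix.mul_assoc (tracelessPart _), tracelessPart_mul_self, smul_smul, ← sq] at this
    simpa using this
  rw [smul_smul] at hh
  have := smul_left_injective F h.1.1.ne_zero hh
  exact Units.ext (mul_right_cancel₀ hdisc (by simpa using this.symm))

theorem isSquare_det_of_discr_eq_zero [NeZero (2 : F)] {A : Matrix (Fin 2) (Fin 2) F}
    (hA : A.discr = 0) : IsSquare A.det := by
  refine ⟨A.trace / 2, ?_⟩
  rw [discr_fin_two] at hA
  field_simp
  linear_combination -hA

/-- The elements of `H ≤ GL₂(F)` whose determinant is a square, as a subgroup of `H`. For a finite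
field, an element of `GL₂(F)` lies in this subgroup iff its class in `PGL₂(F)` comes from
`SL₂(F)`. -/
abbrev squareDetIn (H : Subgroup (GL (Fin 2) F)) : Subgroup H :=
  ((Subgroup.square Fˣ).comap GeneralLinearGroup.det).subgroupOf H

theorem isSquare_units_val_iff {u : Fˣ} : IsSquare (u : F) ↔ IsSquare u := by
  refine ⟨?_, fun h ↦ h.map (Units.coeHom F)⟩
  rintro ⟨a, ha⟩
  have ha0 : a ≠ 0 := by
    rintro rfl
    simp at ha
  exact ⟨Units.mk0 a ha0, Units.ext ha⟩

theorem mem_squareDetIn_iff : g ∈ squareDetIn H ↔ IsSquare g.1.1.det := by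
  rw [Subgroup.mem_subgroupOf, Subgroup.mem_comap, Subgroup.mem_square, ← isSquare_units_val_iff,
    GeneralLinearGroup.val_det_apply]

theorem scalarsIn_le_squareDetIn (H : Subgroup (GL (Fin 2) F)) : scalarsIn H ≤ squareDetIn H := by
  intro g hg
  obtain ⟨a, ha⟩ := mem_scalarsIn_iff.1 hg
  exact mem_squareDetIn_iff.2 ⟨a, by simp [← ha, sq]⟩

theorem isSquare_mul_of_not_isSquare [Finite F] {a b : F} (ha : ¬ IsSquare a)
    (hb : ¬ IsSquare b) : IsSquare (a * b) := by
  classical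
  have := Fintype.ofFinite F
  by_cases h0 : a * b = 0
  · exact h0 ▸ IsSquare.zero
  · rw [← quadraticChar_one_iff_isSquare h0, map_mul,
      quadraticChar_neg_one_iff_not_isSquare.2 ha, quadraticChar_neg_one_iff_not_isSquare.2 hb,
      neg_mul_neg, one_mul]

theorem index_squareDetIn [Finite F] (hH : ¬ ∀ g ∈ H, IsSquare g.1.det) :
    (squareDetIn H).index = 2 := by
  push Not at hH
  obtain ⟨x, hxH, hx⟩ := hH
  refine Subgroup.index_eq_two_iff.2 ⟨⟨x, hxH⟩, fun g ↦ ?_⟩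
  rw [mem_squareDetIn_iff, mem_squareDetIn_iff, Subgroup.coe_mul, Units.val_mul, det_mul]
  by_cases hg : IsSquare g.1.1.det
  · have hgx : ¬ IsSquare (g.1.1.det * x.1.det) := fun h ↦ hx <| by
      simpa [g.1.det_ne_zero] using h.div hg
    exact .inr ⟨hg, hgx⟩
  · exact .inl ⟨isSquare_mul_of_not_isSquare hg hx, hg⟩

theorem exists_val_eq_smul_one_add_smul (hg : g ∉ scalarsIn H) (hgh : Commute g h) :
    ∃ α β : F, h.1.1 = α • 1 + β • g.1.1 :=
  exists_eq_smul_one_add_smul (mem_scalarsIn_iff.not.1 hg) (commute_val_iff.2 hgh)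

theorem centralizer_le_squareDetIn [NeZero (2 : F)] (hg : g ∉ scalarsIn H)
    (hdisc : g.1.1.discr = 0) : Subgroup.centralizer {g} ≤ squareDetIn H := by
  intro h hh
  obtain ⟨α, β, h_eq⟩ :=
    exists_val_eq_smul_one_add_smul hg (mem_centralizer_singleton_iff_commute.1 hh)
  refine mem_squareDetIn_iff.2 (isSquare_det_of_discr_eq_zero ?_)
  rw [h_eq, discr_smul_one_add_smul, hdisc, mul_zero]

theorem trace_ne_zero_of_discr_eq_zero [NeZero (2 : F)] (hdisc : g.1.1.discr = 0) :
    g.1.1.trace ≠ 0 := by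
  intro htr
  rw [discr_fin_two, htr] at hdisc
  have : 2 * (2 * g.1.1.det) = 0 := by linear_combination -hdisc
  simp [two_ne_zero' F, g.1.det_ne_zero] at this

theorem three_le_torusOrder [Finite F] [NeZero (2 : F)] (hg : g ∉ scalarsIn H)
    (hdisc : g.1.1.discr = 0) : 3 ≤ torusOrder (scalarsIn H) g := by
  refine lt_of_le_of_ne (two_le_torusOrder hg) fun h2 ↦
    trace_ne_zero_of_discr_eq_zero hdisc ?_
  refine trace_eq_zero_of_mul_self_mem_range_scalar (mem_scalarsIn_iff.not.1 hg) ?_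
  have := (isCommTransitiveModulo_scalarsIn H).pow_torusOrder_mem
    (self_mem_centralizer_singleton g)
  rwa [← h2, sq, mem_scalarsIn_iff] at this

theorem exists_tracelessPart_mul_eq_smul [NeZero (2 : F)] (hg : g ∉ scalarsIn H)
    (hdisc : g.1.1.discr = 0) {c : F}
    (hc : h.1.1 * tracelessPart g.1.1 = c • (tracelessPart g.1.1 * h.1.1)) :
    ∃ m : F, m ≠ 0 ∧ tracelessPart g.1.1 * h.1.1 = m • tracelessPart g.1.1 := by
  have hV := tracelessPart_ne_zero (mem_scalarsIn_iff.not.1 hg)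
  have hVV := tracelessPart_mul_self g.1.1
  rw [hdisc, zero_smul] at hVV
  have hVhV : tracelessPart g.1.1 * h.1.1 * tracelessPart g.1.1 = 0 := by
    rw [Matrix.mul_assoc, hc, Matrix.mul_smul, ← Matrix.mul_assoc, hVV, Matrix.zero_mul, smul_zero]
  obtain ⟨m, hm⟩ := exists_eq_smul_of_mul_eq_zero hV hVV
    (by rw [← Matrix.mul_assoc, hVV, Matrix.zero_mul]) hVhV
  refine ⟨m, ?_, hm⟩
  rintro rfl
  exact (Units.mul_left_eq_zero h.1).not.2 hV (by rw [hm, zero_smul])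

theorem exists_trace_and_det_eq_of_parabolic [NeZero (2 : F)] (hg : g ∉ scalarsIn H)
    (hdisc : g.1.1.discr = 0) {c : F}
    (hc : h.1.1 * tracelessPart g.1.1 = c • (tracelessPart g.1.1 * h.1.1)) (hc1 : c ≠ 1) :
    ∃ m : F, m ≠ 0 ∧ tracelessPart g.1.1 * h.1.1 = m • tracelessPart g.1.1 ∧
      h.1.1.trace = c * m + m ∧ h.1.1.det = c * m * m := by
  obtain ⟨m, hm0, hm⟩ := exists_tracelessPart_mul_eq_smul hg hdisc hc
  refine ⟨m, hm0, hm, trace_eq_add_and_det_eq_mul (tracelessPart_ne_zero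
    (mem_scalarsIn_iff.not.1 hg)) (fun h ↦ hc1 (mul_right_cancel₀ hm0 (by rw [h, one_mul]))) ?_ hm⟩
  rw [hc, hm, smul_smul]

theorem centralizer_le_normalizer_centralizer [NeZero (2 : F)] (hg : g ∉ scalarsIn H)
    (hdisc : g.1.1.discr = 0) {s : H} (hs : s ∉ scalarsIn H)
    (hsN : s ∈ Subgroup.normalizer (Subgroup.centralizer {g} : Set H)) :
    Subgroup.centralizer {s} ≤ Subgroup.normalizer (Subgroup.centralizer {g} : Set H) := by
  intro t ht
  obtain ⟨α, β, ht⟩ :=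
    exists_val_eq_smul_one_add_smul hs (mem_centralizer_singleton_iff_commute.1 ht)
  obtain ⟨χ, hχ, -⟩ := exists_weylCharacter hg
  have hsV := hχ ⟨s, hsN⟩
  set V := tracelessPart g.1.1
  obtain ⟨m, -, hm⟩ := exists_tracelessPart_mul_eq_smul hg hdisc hsV
  have hVt : V * t.1.1 = (α + β * m) • V := by
    rw [ht, mul_add, Matrix.mul_smul, Matrix.mul_one, Matrix.mul_smul, hm, smul_smul, add_smul]
  have hm0 : α + β * m ≠ 0 := by
    intro h
    rw [h, zero_smul] at hVt
    exact (Units.mul_left_eq_zero t.1).not.2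
      (tracelessPart_ne_zero (mem_scalarsIn_iff.not.1 hg)) hVt
  refine (mem_normalizer_centralizer_iff_exists hg).2 ⟨(α + β * (χ ⟨s, hsN⟩ * m)) / (α + β * m), ?_⟩
  rw [hVt, smul_smul, div_mul_cancel₀ _ hm0, ht, add_mul, smul_mul, Matrix.one_mul, smul_mul,
    hsV, hm, smul_smul, smul_smul, ← add_smul, mul_assoc]

theorem torusOrder_eq_card_range {s : H}
    (χ : Subgroup.normalizer (Subgroup.centralizer {g} : Set H) →* Fˣ)
    (hχ : ∀ h, χ h = 1 ↔ Commute h.1 g)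
    (hsC : Subgroup.centralizer {s} ≤ Subgroup.normalizer (Subgroup.centralizer {g} : Set H))
    (hsg : ¬ Commute s g)
    (hs : Subgroup.zpowers (χ ⟨s, hsC (self_mem_centralizer_singleton s)⟩) = χ.range) :
    torusOrder (scalarsIn H) s = Nat.card χ.range := by
  have hZ := isCommTransitiveModulo_scalarsIn H
  have hker : (χ.comp (Subgroup.inclusion hsC)).ker =
      (scalarsIn H).subgroupOf (Subgroup.centralizer {s}) := by
    ext t
    rw [MonoidHom.mem_ker, MonoidHom.comp_apply, hχ, Subgroup.mem_subgroupOf,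
      Subgroup.coe_inclusion]
    refine ⟨fun htg ↦ by_contra fun ht ↦ hsg <|
      hZ.trans ht (mem_centralizer_singleton_iff_commute.1 t.2) htg, fun ht ↦ ?_⟩
    exact (Subgroup.mem_center_iff.1 (hZ.le_center ht) g).symm
  have hrange : (χ.comp (Subgroup.inclusion hsC)).range = χ.range := by
    refine le_antisymm ?_ ?_
    · rintro _ ⟨t, rfl⟩
      exact ⟨_, rfl⟩
    rw [← hs, Subgroup.zpowers_le]
    exact ⟨⟨s, self_mem_centralizer_singleton s⟩, rfl⟩
  rw [torusOrder, Subgroup.relIndex, ← hker, Subgroup.index_ker, hrange]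

theorem exists_weylOrder_eq_torusOrder [Finite F] [NeZero (2 : F)] (hg : g ∉ scalarsIn H)
    (hdisc : g.1.1.discr = 0) (hw : weylOrder g ≠ 1) :
    ∃ s ∉ scalarsIn H, s.1.1.discr ≠ 0 ∧ weylOrder g = torusOrder (scalarsIn H) s ∧
      Subgroup.centralizer {s} ≤ Subgroup.normalizer (Subgroup.centralizer {g} : Set H) := by
  obtain ⟨χ, hχ, hχ1⟩ := exists_weylCharacter hg
  have hcard := weylOrder_eq_card_range χ hχ1
  obtain ⟨u, hu⟩ := (Subgroup.isCyclic_iff_exists_zpowers_eq_top χ.range).1 inferInstance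
  obtain ⟨s, rfl⟩ : u ∈ χ.range := hu ▸ Subgroup.mem_zpowers u
  have hsg : χ s ≠ 1 := fun h ↦ hw <| by
    rw [hcard, ← hu, h, Subgroup.zpowers_one_eq_bot, Subgroup.card_bot]
  have hsg' : ¬ Commute s.1 g := (hχ1 s).not.1 hsg
  have hsZ : s.1 ∉ scalarsIn H := fun h ↦ hsg'
    (Subgroup.mem_center_iff.1 ((isCommTransitiveModulo_scalarsIn H).le_center h) g).symm
  have hsC := centralizer_le_normalizer_centralizer hg hdisc hsZ s.2
  refine ⟨s, hsZ, ?_, hcard.trans (torusOrder_eq_card_range χ hχ1 hsC hsg' hu).symm, hsC⟩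
  have hc1 : (χ s : F) ≠ 1 := Units.val_eq_one.not.2 hsg
  obtain ⟨m, hm0, -, htr, hdet⟩ :=
    exists_trace_and_det_eq_of_parabolic hg hdisc (hχ s) hc1
  have : s.1.1.1.discr = ((χ s - 1) * m) ^ 2 := by
    rw [discr_fin_two, htr, hdet]
    ring
  rw [this]
  exact pow_ne_zero _ (mul_ne_zero (sub_ne_zero.2 hc1) hm0)

theorem addSubgroup_eq_top_of_forall_mul_mem {c b : F} (hc : Subring.closure {c} = ⊤)
    (I : AddSubgroup F) (hI : ∀ a ∈ I, c * a ∈ I) (hb : b ∈ I) (hb0 : b ≠ 0) : I = ⊤ := by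
  have hmul (x : F) (hx : x ∈ Subring.closure {c}) : ∀ a ∈ I, x * a ∈ I := by
    induction hx using Subring.closure_induction with
    | mem x hx => exact Set.mem_singleton_iff.1 hx ▸ hI
    | zero => simp
    | one => simp
    | add x y _ _ hx hy => exact fun a ha ↦ add_mul x y a ▸ I.add_mem (hx a ha) (hy a ha)
    | neg x _ hx => exact fun a ha ↦ neg_mul x a ▸ I.neg_mem (hx a ha)
    | mul x y _ _ hx hy => exact fun a ha ↦ mul_assoc x y a ▸ hx _ (hy a ha)
  refine (AddSubgroup.eq_top_iff' I).2 fun x ↦ ?_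
  simpa [hb0] using hmul (x / b) (hc ▸ Subring.mem_top _) b hb

/-- The set of `b` such that the transvection `1 + b • V` lies in `H`, where `V * V = 0`. -/
def transvectionCoeffs (H : Subgroup (GL (Fin 2) F)) {V : Matrix (Fin 2) (Fin 2) F}
    (hV : V * V = 0) : AddSubgroup F where
  carrier := {b | ∃ h : H, h.1.1 = 1 + b • V}
  zero_mem' := ⟨1, by simp⟩
  add_mem' := by
    rintro a b ⟨h, hh⟩ ⟨k, hk⟩
    refine ⟨h * k, ?_⟩
    simp [hh, hk, add_mul, mul_add, hV, add_smul]
    abel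
  neg_mem' := by
    rintro a ⟨h, hh⟩
    refine ⟨h⁻¹, ?_⟩
    have : h.1.1 * (1 + -a • V) = 1 := by simp [hh, mul_add, add_mul, hV]
    exact Units.inv_eq_of_mul_eq_one_right this

theorem exists_val_eq_smul (hH : Subgroup.center (GL (Fin 2) F) ≤ H) {a : F} (ha : a ≠ 0) :
    ∃ z : H, z.1.1 = a • 1 := by
  refine ⟨⟨GeneralLinearGroup.scalar (Fin 2) (Units.mk0 a ha), hH ?_⟩, ?_⟩
  · rw [GeneralLinearGroup.mem_center_iff_val_mem_range_scalar]
    exact ⟨a, rfl⟩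
  · rw [smul_one_eq_diagonal]
    rfl

theorem transvectionCoeffs_eq_top [NeZero (2 : F)] (hH : Subgroup.center (GL (Fin 2) F) ≤ H)
    (hF : ∀ c : F, ¬ IsSquare c → Subring.closure {c} = ⊤) (hg : g ∉ scalarsIn H)
    (hV : tracelessPart g.1.1 * tracelessPart g.1.1 = 0)
    (hN : ¬ Subgroup.normalizer (Subgroup.centralizer {g} : Set H) ≤ squareDetIn H) :
    transvectionCoeffs H hV = ⊤ := by
  have hdisc : g.1.1.discr = 0 := by
    rw [tracelessPart_mul_self] at hV
    exact (smul_eq_zero.1 hV).resolve_right one_ne_zero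
  obtain ⟨r, hrN, hr⟩ := SetLike.not_le_iff_exists.1 hN
  obtain ⟨χ, hχ, hχ1⟩ := exists_weylCharacter hg
  have hrV := hχ ⟨r, hrN⟩
  set c := (χ ⟨r, hrN⟩).val
  have hc1 : c ≠ 1 := fun h ↦ hr <| centralizer_le_squareDetIn hg hdisc <|
    mem_centralizer_singleton_iff_commute.2 ((hχ1 ⟨r, hrN⟩).1 (Units.ext h)).symm
  have hc : ¬ IsSquare c := by
    obtain ⟨m, -, -, -, hdet⟩ := exists_trace_and_det_eq_of_parabolic hg hdisc hrV hc1
    refine fun hc ↦ hr (mem_squareDetIn_iff.2 ?_)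
    rw [hdet, mul_assoc]
    exact hc.mul (IsSquare.mul_self m)
  have htr := trace_ne_zero_of_discr_eq_zero hdisc
  refine addSubgroup_eq_top_of_forall_mul_mem (b := g.1.1.trace⁻¹) (hF c hc) _ ?_ ?_
    (inv_ne_zero htr)
  · rintro b ⟨h, hh⟩
    refine ⟨r * h * r⁻¹, ?_⟩
    have hconj : (r * h * r⁻¹).1.1 = r.1.1 * h.1.1 * r.1.inv := rfl
    rw [hconj, hh, mul_add, Matrix.mul_smul, hrV, add_mul, Matrix.mul_one, r.1.val_inv, smul_smul,
      smul_mul, Matrix.mul_assoc, r.1.val_inv, Matrix.mul_one, mul_comm]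
  · obtain ⟨z, hz⟩ := exists_val_eq_smul hH (div_ne_zero (two_ne_zero' F) htr)
    refine ⟨z * g, ?_⟩
    simp [hz, tracelessPart, smul_sub, smul_smul, htr, div_eq_inv_mul]

end LinearSubgroup

section UpperUnipotent

variable {F : Type*} [Field F] {H : Subgroup (GL (Fin 2) F)} {x y : GL (Fin 2) F}
  (hH : ∀ b : F, GeneralLinearGroup.upperRightHom b ∈ H)
include hH

theorem mem_of_apply_one_zero_eq (hx : x ∈ H) (hx0 : x.1 1 0 ≠ 0) (hxy : y.1 1 0 = x.1 1 0)
    (hdet : y.1.det = x.1.det) : y ∈ H := by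
  have hy : y = GeneralLinearGroup.upperRightHom ((y.1 0 0 - x.1 0 0) / x.1 1 0) * x *
      GeneralLinearGroup.upperRightHom ((y.1 1 1 - x.1 1 1) / x.1 1 0) := by
    rw [det_fin_two, det_fin_two, hxy] at hdet
    ext i j
    simp only [Units.val_mul, mul_apply, Fin.sum_univ_two]
    fin_cases i <;> fin_cases j <;>
      simp [GeneralLinearGroup.upperRightHom, hxy] <;> grind
  rw [hy]
  exact H.mul_mem (H.mul_mem (hH _) hx) (hH _)

theorem mem_of_det_eq_one_of_apply_one_zero_ne_zero (hx : x ∈ H) (hx0 : x.1 1 0 ≠ 0)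
    (hy : y.1.det = 1) (hy0 : y.1 1 0 ≠ 0) : y ∈ H := by
  set u : GL (Fin 2) F := GeneralLinearGroup.upperRightHom
    (((1 - y.1 1 1) * x.1 1 0 / y.1 1 0 - x.1 0 0) / x.1 1 0) with hu
  have hux : u * x ∈ H := H.mul_mem (hH _) hx
  have hux0 : (u * x).1 1 0 = x.1 1 0 := by
    simp [hu, GeneralLinearGroup.upperRightHom, mul_apply]
  refine (H.mul_mem_cancel_right hux).1
    (mem_of_apply_one_zero_eq hH hux (hux0 ▸ hx0) ?_ (by simp [hy]))
  simp only [hu, Units.val_mul, mul_apply, Fin.sum_univ_two]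
  simp [GeneralLinearGroup.upperRightHom]
  grind

theorem mem_of_det_eq_one (hx : x ∈ H) (hx0 : x.1 1 0 ≠ 0) (hy : y.1.det = 1) : y ∈ H := by
  by_cases hy0 : y.1 1 0 = 0
  · let l : GL (Fin 2) F := GeneralLinearGroup.mkOfDetNeZero !![1, 0; 1, 1] (by simp)
    have hl : l ∈ H := mem_of_det_eq_one_of_apply_one_zero_ne_zero hH hx hx0
      (by simp [l, GeneralLinearGroup.mkOfDetNeZero])
      (by simp [l, GeneralLinearGroup.mkOfDetNeZero])
    have hy1 : y.1 1 1 ≠ 0 := by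
      intro h
      simp [det_fin_two, hy0, h] at hy
    refine (H.mul_mem_cancel_right hl).1
      (mem_of_det_eq_one_of_apply_one_zero_ne_zero hH hx hx0 ?_ ?_)
    · simp [l, GeneralLinearGroup.mkOfDetNeZero, hy]
    · simpa [l, GeneralLinearGroup.mkOfDetNeZero, mul_apply, hy0] using hy1
  · exact mem_of_det_eq_one_of_apply_one_zero_ne_zero hH hx hx0 hy hy0

theorem mem_of_isSquare_det (hZ : Subgroup.center (GL (Fin 2) F) ≤ H) (hx : x ∈ H)
    (hx0 : x.1 1 0 ≠ 0) (hy : IsSquare y.1.det) : y ∈ H := by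
  obtain ⟨a, ha⟩ := hy
  have ha0 : a ≠ 0 := by
    rintro rfl
    exact y.det_ne_zero (by rw [ha, mul_zero])
  obtain ⟨z, hz⟩ := exists_val_eq_smul hZ (inv_ne_zero ha0)
  refine (H.mul_mem_cancel_left z.2).1 (mem_of_det_eq_one hH hx hx0 ?_)
  rw [Units.val_mul, hz, det_mul, det_smul, det_one, ha, Fintype.card_fin]
  field_simp

theorem eq_top_of_trace_eq_zero_of_upperRightHom_mem [Finite F]
    (hZ : Subgroup.center (GL (Fin 2) F) ≤ H) (hneg : IsSquare (-1 : F)) (hx : x ∈ H)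
    (htr : x.1.trace = 0) (hdet : ¬ IsSquare x.1.det) : H = ⊤ := by
  have hx0 : x.1 1 0 ≠ 0 := by
    intro h0
    rw [trace_fin_two, add_eq_zero_iff_eq_neg] at htr
    refine hdet ?_
    rw [det_fin_two, h0, mul_zero, sub_zero, htr, neg_mul, ← neg_one_mul]
    exact hneg.mul (IsSquare.mul_self _)
  refine (Subgroup.eq_top_iff' H).2 fun y ↦ ?_
  by_cases hy : IsSquare y.1.det
  · exact mem_of_isSquare_det hH hZ hx hx0 hy
  · refine (H.mul_mem_cancel_right hx).1 (mem_of_isSquare_det hH hZ hx hx0 ?_)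
    rw [Units.val_mul, det_mul]
    exact isSquare_mul_of_not_isSquare hy hdet

end UpperUnipotent

theorem exists_mul_eq_mul_of_mul_self_eq_zero {F : Type*} [Field F] {V : Matrix (Fin 2) (Fin 2) F}
    (hV : V ≠ 0) (hVV : V * V = 0) : ∃ P : GL (Fin 2) F, V * P.1 = P.1 * !![0, 1; 0, 0] := by
  have h := Matrix.ext_iff.2 hVV
  simp only [Fin.forall_fin_two, mul_apply, Fin.sum_univ_two, Matrix.zero_apply] at h
  by_cases h10 : V 1 0 = 0
  · have h00 : V 0 0 = 0 := by simpa [h10] using h.1.1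
    have h11 : V 1 1 = 0 := by simpa [h10] using h.2.2
    have h01 : V 0 1 ≠ 0 := fun h01 ↦ hV <| by
      ext i j
      fin_cases i <;> fin_cases j <;> simp [h00, h01, h10, h11]
    refine ⟨GeneralLinearGroup.mkOfDetNeZero !![V 0 1, 0; 0, 1] (by simpa), ?_⟩
    ext i j
    fin_cases i <;> fin_cases j <;>
      simp [GeneralLinearGroup.mkOfDetNeZero, mul_apply, h00, h10, h11]
  · refine ⟨GeneralLinearGroup.mkOfDetNeZero !![V 0 0, 1; V 1 0, 0] (by simpa), ?_⟩
    ext i j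
    fin_cases i <;> fin_cases j <;> simp [GeneralLinearGroup.mkOfDetNeZero, mul_apply, h]

section LinearSubgroup

variable {F : Type*} [Field F] {H : Subgroup (GL (Fin 2) F)}

theorem eq_top_of_trace_eq_zero [Finite F] {V : Matrix (Fin 2) (Fin 2) F}
    (hV : V ≠ 0) (hVV : V * V = 0) (hH : transvectionCoeffs H hVV = ⊤)
    (hZ : Subgroup.center (GL (Fin 2) F) ≤ H) (hneg : IsSquare (-1 : F)) {x : GL (Fin 2) F}
    (hx : x ∈ H) (htr : x.1.trace = 0) (hdet : ¬ IsSquare x.1.det) : H = ⊤ := by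
  obtain ⟨P, hP⟩ := exists_mul_eq_mul_of_mul_self_eq_zero hV hVV
  let φ : GL (Fin 2) F ≃* GL (Fin 2) F := MulAut.conj P
  have hx' : (φ.symm x).1 = P.inv * x.1 * P.1 := rfl
  suffices htop : H.comap φ.toMonoidHom = ⊤ by
    refine (Subgroup.eq_top_iff' H).2 fun y ↦ ?_
    have : φ.symm y ∈ H.comap φ.toMonoidHom := htop ▸ Subgroup.mem_top _
    simpa using this
  refine eq_top_of_trace_eq_zero_of_upperRightHom_mem (x := φ.symm x) (fun b ↦ ?_)
    (fun z hz ↦ ?_) hneg ?_ ?_ ?_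
  · obtain ⟨h, hh⟩ : b ∈ transvectionCoeffs H hVV := hH ▸ AddSubgroup.mem_top b
    have hb : (GeneralLinearGroup.upperRightHom b).1 = 1 + b • !![(0 : F), 1; 0, 0] := by
      ext i j
      fin_cases i <;> fin_cases j <;> simp [GeneralLinearGroup.upperRightHom]
    have : φ (GeneralLinearGroup.upperRightHom b) = h := by
      rw [MulAut.conj_apply, mul_inv_eq_iff_eq_mul]
      ext1
      rw [Units.val_mul, Units.val_mul, hb, hh, mul_add, add_mul, Matrix.mul_smul, smul_mul, hP,
        Matrix.mul_one, Matrix.one_mul]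
    exact Subgroup.mem_comap.2 (this ▸ h.2)
  · have : φ z = z := by
      rw [MulAut.conj_apply, Subgroup.mem_center_iff.1 hz P, mul_inv_cancel_right]
    exact Subgroup.mem_comap.2 (this.symm ▸ hZ hz)
  · simpa using hx
  · rw [hx', trace_mul_cycle, P.val_inv, Matrix.one_mul, htr]
  · rwa [hx', det_mul, det_mul, mul_right_comm, ← det_mul, P.inv_val, det_one, one_mul]

theorem isSquare_det_of_pow_four_mem (h2 : IsSquare (2 : F)) {g : H} (hg : g ∉ scalarsIn H)
    (hg4 : g ^ 4 ∈ scalarsIn H) (htr : g.1.1.trace ≠ 0) : IsSquare g.1.1.det := by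
  have h := trace_sq_eq_two_mul_det (mem_scalarsIn_iff.not.1 hg) htr <| by
    simpa [mem_scalarsIn_iff, pow_succ, Matrix.mul_assoc] using hg4
  have h20 : (2 : F) ≠ 0 := by
    intro h0
    rw [h0, zero_mul] at h
    exact htr (pow_eq_zero_iff two_ne_zero |>.1 h)
  rw [← mul_div_cancel_left₀ g.1.1.det h20, ← h]
  exact (IsSquare.sq _).div h2

theorem exists_mem_centralizer_mem_squareDetIn_notMem_scalarsIn [Finite F] {g : H}
    (hg : g ∉ squareDetIn H) (h2 : torusOrder (scalarsIn H) g ≠ 2) :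
    ∃ i ∈ Subgroup.centralizer {g}, i ∈ squareDetIn H ∧ i ∉ scalarsIn H := by
  by_contra! h
  have hinf : scalarsIn H = squareDetIn H ⊓ Subgroup.centralizer {g} :=
    le_antisymm (le_inf (scalarsIn_le_squareDetIn H)
      ((isCommTransitiveModulo_scalarsIn H).le_centralizer g)) fun i hi ↦ h i hi.2 hi.1
  refine h2 ?_
  rw [torusOrder, hinf, Subgroup.inf_relIndex_right]
  exact relIndex_eq_two_of_not_le
    (index_squareDetIn fun h ↦ hg (mem_squareDetIn_iff.2 (h g.1 g.2)))
    fun h ↦ hg (h (self_mem_centralizer_singleton g))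

theorem torusOrder_ne_four [Finite F] [NeZero (2 : F)] (h2 : IsSquare (2 : F)) {g : H}
    (hg : g ∉ squareDetIn H) : torusOrder (scalarsIn H) g ≠ 4 := by
  intro h4
  have hgZ : g ∉ scalarsIn H := mt (@scalarsIn_le_squareDetIn _ _ H g) hg
  have hpow {h : H} (hh : h ∈ Subgroup.centralizer {g}) : h ^ 4 ∈ scalarsIn H :=
    h4 ▸ (isCommTransitiveModulo_scalarsIn H).pow_torusOrder_mem hh
  have trace_eq_zero {h : H} (hh : h ∈ Subgroup.centralizer {g}) (hhK : h ∉ squareDetIn H) :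
      h.1.1.trace = 0 := by
    by_contra htr
    exact hhK <| mem_squareDetIn_iff.2 <| isSquare_det_of_pow_four_mem h2
      (mt (@scalarsIn_le_squareDetIn _ _ H h) hhK) (hpow hh) htr
  obtain ⟨i, hiC, hiK, hiZ⟩ := exists_mem_centralizer_mem_squareDetIn_notMem_scalarsIn hg (by omega)
  have hgtr := trace_eq_zero (self_mem_centralizer_singleton g) hg
  have higtr := trace_eq_zero (mul_mem hiC (self_mem_centralizer_singleton g))
    ((Subgroup.mul_mem_cancel_left _ hiK).not.2 hg)
  obtain ⟨α, β, hi⟩ :=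
    exists_val_eq_smul_one_add_smul hgZ (mem_centralizer_singleton_iff_commute.1 hiC)
  have hβ : β = 0 := by
    rw [Subgroup.coe_mul, Units.val_mul, hi, add_mul, smul_mul, smul_mul, Matrix.one_mul,
      mul_self_eq_trace_smul_sub_det_smul, hgtr] at higtr
    simpa [hgtr, g.1.det_ne_zero, two_ne_zero' F] using higtr
  refine hiZ (mem_scalarsIn_iff.2 ⟨α, ?_⟩)
  rw [hi, hβ, zero_smul, add_zero, smul_one_eq_diagonal, scalar_apply]

theorem normalizer_centralizer_le_squareDetIn [Finite F] [NeZero (2 : F)]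
    (hF : ∀ c : F, ¬ IsSquare c → Subring.closure {c} = ⊤) (hneg : IsSquare (-1 : F))
    (hH : H ≠ ⊤) (hZ : Subgroup.center (GL (Fin 2) F) ≤ H) {x : GL (Fin 2) F} (hx : x ∈ H)
    (htr : x.1.trace = 0) (hdet : ¬ IsSquare x.1.det) {g : H} (hg : g ∉ scalarsIn H)
    (hdisc : g.1.1.discr = 0) :
    Subgroup.normalizer (Subgroup.centralizer {g} : Set H) ≤ squareDetIn H := by
  by_contra hN
  have hVV : tracelessPart g.1.1 * tracelessPart g.1.1 = 0 := by
    rw [tracelessPart_mul_self, hdisc, zero_smul]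
  exact hH <| eq_top_of_trace_eq_zero (tracelessPart_ne_zero (mem_scalarsIn_iff.not.1 hg)) hVV
    (transvectionCoeffs_eq_top hZ hF hg hVV hN) hZ hneg hx htr hdet

theorem exists_normalizer_centralizer_eq_top [Finite F] [NeZero (2 : F)]
    (hF : ∀ c : F, ¬ IsSquare c → Subring.closure {c} = ⊤) (hneg : IsSquare (-1 : F))
    (h2 : IsSquare (2 : F)) (hH : H ≠ ⊤) (hZ : Subgroup.center (GL (Fin 2) F) ≤ H)
    {x : GL (Fin 2) F} (hx : x ∈ H) (htr : x.1.trace = 0) (hdet : ¬ IsSquare x.1.det) :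
    ∃ g ∉ scalarsIn H, g.1.1.discr ≠ 0 ∧
      Subgroup.normalizer (Subgroup.centralizer {g} : Set H) = ⊤ := by
  refine (isCommTransitiveModulo_scalarsIn H).exists_normalizer_centralizer_eq_top
    (S := fun g ↦ g.1.1.discr ≠ 0) (index_squareDetIn fun h ↦ hdet (h x hx))
    (scalarsIn_le_squareDetIn H) (fun g ↦ weylOrder_le_two)
    (fun g ↦ mt fun hdisc ↦ mem_squareDetIn_iff.2 (isSquare_det_of_discr_eq_zero hdisc))
    (fun g hg hdisc ↦ ?_) fun g ↦ torusOrder_ne_four h2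
  rw [not_not] at hdisc
  refine ⟨three_le_torusOrder hg hdisc, or_iff_not_imp_left.2 fun hw ↦ ?_⟩
  obtain ⟨s, hs, hs0, hsw, hsC⟩ := exists_weylOrder_eq_torusOrder hg hdisc hw
  exact ⟨s, hs, hsC.trans
    (normalizer_centralizer_le_squareDetIn hF hneg hH hZ hx htr hdet hg hdisc), hs0, hsw⟩

end LinearSubgroup

section FiniteField

theorem sub_one_dvd_pow_div_two {e m : ℕ} (he : Odd e) (hm : Even m) : e - 1 ∣ e ^ m / 2 := by
  obtain ⟨k, rfl⟩ := hm.two_dvd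
  obtain ⟨a, rfl⟩ := he
  obtain ⟨w, hw⟩ : (2 * a + 1) ^ 2 - 1 ∣ (2 * a + 1) ^ (2 * k) - 1 := by
    simpa [pow_mul] using Nat.sub_dvd_pow_sub_pow ((2 * a + 1) ^ 2) 1 k
  have hsq : (2 * a + 1) ^ 2 - 1 = 2 * (2 * a * (a + 1)) := Nat.sub_eq_of_eq_add (by ring)
  have hodd : Odd ((2 * a + 1) ^ (2 * k)) := Odd.pow ⟨a, rfl⟩
  refine ⟨(a + 1) * w, ?_⟩
  rw [hsq, mul_assoc] at hw
  rw [add_tsub_cancel_right, ← mul_assoc]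
  obtain ⟨b, hb⟩ := hodd
  omega

theorem odd_pow_two_pow_mod_eight {r n : ℕ} (hr : Odd r) (hn : n ≠ 0) : r ^ 2 ^ n % 8 = 1 := by
  obtain ⟨m, rfl⟩ := Nat.exists_eq_succ_of_ne_zero hn
  rw [pow_succ, pow_mul]
  have hpos : 0 < (r ^ 2 ^ m) ^ 2 := pow_pos (pow_pos hr.pos _) _
  have := Nat.eight_dvd_sq_sub_one_of_odd (hr.pow (n := 2 ^ m))
  omega

theorem closure_singleton_eq_top_of_not_isSquare {F : Type*} [Field F] [Fintype F] {p n : ℕ}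
    (hp : p.Prime) (hodd : Odd p) (hF : Fintype.card F = p ^ 2 ^ n) {c : F} (hc : ¬ IsSquare c) :
    Subring.closure {c} = ⊤ := by
  set E := Subring.closure {c} with hE
  let _ : Field E := (Finite.isField_of_domain E).toField
  let _ : Fintype E := Fintype.ofFinite E
  have hcard : Fintype.card F = Fintype.card E ^ Module.finrank E F := Module.card_eq_pow_finrank
  obtain ⟨j, -, hj⟩ := (Nat.dvd_prime_pow hp).1
    (hF ▸ hcard ▸ dvd_pow_self (Fintype.card E) Module.finrank_pos.ne')
  obtain ⟨i, -, hi⟩ : ∃ i ≤ n, Module.finrank E F = 2 ^ i := by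
    refine (Nat.dvd_prime_pow Nat.prime_two).1 (Dvd.intro_left j ?_)
    rw [hF, hj, ← pow_mul] at hcard
    exact (Nat.pow_right_injective hp.two_le hcard).symm
  obtain rfl | hi0 := i.eq_zero_or_pos
  · rw [hi, pow_zero, pow_one] at hcard
    have hsurj := ((Fintype.bijective_iff_injective_and_card E.subtype).2
      ⟨E.subtype_injective, hcard.symm⟩).surjective
    exact (Subring.eq_top_iff' E).2 fun y ↦ by obtain ⟨w, rfl⟩ := hsurj y; exact w.2
  · have hc0 : c ≠ 0 := by rintro rfl; exact hc .zero
    have hcE : c ^ (Fintype.card E - 1) = 1 :=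
      congrArg Subtype.val (FiniteField.pow_card_sub_one_eq_one
        (⟨c, Subring.mem_closure_of_mem rfl⟩ : E) (fun h ↦ hc0 (congrArg Subtype.val h)))
    have hchar : ringChar F ≠ 2 := fun h ↦ by
      have := FiniteField.even_card_of_char_two h
      have : Odd (Fintype.card F) := hF ▸ hodd.pow
      grind
    refine absurd ((FiniteField.isSquare_iff hchar hc0).2 ?_) hc
    obtain ⟨m, hm⟩ := sub_one_dvd_pow_div_two (e := Fintype.card E) (hj ▸ hodd.pow)
      (hi ▸ (even_two.pow_of_ne_zero hi0.ne' : Even (2 ^ i)))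
    rw [hcard, hm, pow_mul, hcE, one_pow]

end FiniteField

section DihedralGroup

variable {G : Type*} [Group G] {C : Subgroup G} {t : G}

theorem mul_eq_mul_inv_of_mul_self_eq_one (h : ∀ s ∉ C, s * s = 1) (ht : t ∉ C) {c : G}
    (hc : c ∈ C) : c * t = t * c⁻¹ := by
  have htc : t * c ∉ C := (C.mul_mem_cancel_right hc).not.2 ht
  have := h _ htc
  rw [eq_mul_inv_iff_mul_eq, ← mul_left_inj t, ← mul_right_inj t]
  grind

theorem nonempty_mulEquiv_dihedralGroup [IsCyclic C] (hC : C.index = 2)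
    (h : ∀ s ∉ C, s * s = 1) : Nonempty (G ≃* DihedralGroup (Nat.card C)) := by
  obtain ⟨t, ht⟩ : ∃ t, t ∉ C := by
    by_contra! hall
    rw [(Subgroup.eq_top_iff' C).2 hall, Subgroup.index_top] at hC
    exact absurd hC (by norm_num)
  let e := zmodCyclicMulEquiv (inferInstance : IsCyclic C)
  have hcomm (i : ZMod (Nat.card C)) : (e (.ofAdd i) : G) * t = t * (e (.ofAdd i) : G)⁻¹ :=
    mul_eq_mul_inv_of_mul_self_eq_one h ht (SetLike.coe_mem _)
  have hdiv (i j : ZMod (Nat.card C)) :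
      (e (.ofAdd j) : G) / e (.ofAdd i) = (e (.ofAdd i) : G)⁻¹ * e (.ofAdd j) := by
    rw [← Subgroup.coe_div, ← map_div, ← Subgroup.coe_inv, ← Subgroup.coe_mul, ← map_inv,
      ← map_mul, div_eq_inv_mul]
  let f : DihedralGroup (Nat.card C) →* G := MonoidHom.mk' (fun
    | .r i => e (.ofAdd i)
    | .sr i => t * e (.ofAdd i)) <| by
      rintro (i | i) (j | j)
      · simp
      · rw [← mul_assoc, hcomm, mul_assoc]
        simp [hdiv]
      · simp [mul_assoc]
      · rw [← mul_assoc, mul_assoc t _ t, hcomm, ← mul_assoc, h t ht]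
        simp [hdiv]
  refine ⟨(MulEquiv.ofBijective f ⟨?_, fun s ↦ ?_⟩).symm⟩
  · rw [injective_iff_map_eq_one]
    rintro (i | i) hi
    · have : i = 0 := by simpa [f] using hi
      rw [this, DihedralGroup.r_zero]
    · refine absurd ?_ ht
      rw [eq_inv_of_mul_eq_one_left hi]
      exact C.inv_mem (SetLike.coe_mem _)
  · by_cases hs : s ∈ C
    · exact ⟨.r (e.symm ⟨s, hs⟩).toAdd, by simp [f]⟩
    · have hts : t⁻¹ * s ∈ C := by rw [Subgroup.mul_mem_iff_of_index_two hC]; simp [ht, hs]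
      exact ⟨.sr (e.symm ⟨t⁻¹ * s, hts⟩).toAdd, by simp [f]⟩

end DihedralGroup

section ProjectiveGL2

variable {F : Type} [Field F] {g h V : GL (Fin 2) F}

/-- The canonical projection `GL₂(F) → PGL₂(F)`. -/
abbrev toProjectiveGL2 : GL (Fin 2) F →* ProjectiveGL2 F :=
  QuotientGroup.mk' (Subgroup.center (GL (Fin 2) F))

theorem toProjectiveGL2_surjective : Function.Surjective (toProjectiveGL2 (F := F)) :=
  QuotientGroup.mk'_surjective _

theorem toProjectiveGL2_eq_one_iff :
    toProjectiveGL2 g = 1 ↔ g.1 ∈ Set.range (scalar (Fin 2)) := by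
  rw [← GeneralLinearGroup.mem_center_iff_val_mem_range_scalar]
  exact QuotientGroup.eq_one_iff g

theorem toProjectiveGL2_eq_iff :
    toProjectiveGL2 g = toProjectiveGL2 h ↔ ∃ c : F, g.1 = c • h.1 := by
  rw [← div_eq_one, ← map_div, toProjectiveGL2_eq_one_iff]
  refine exists_congr fun c ↦ ?_
  rw [scalar_apply, ← smul_one_eq_diagonal, div_eq_mul_inv, Units.val_mul, eq_comm,
    Units.mul_inv_eq_iff_eq_mul, smul_mul, Matrix.one_mul]

theorem commute_toProjectiveGL2_iff :
    Commute (toProjectiveGL2 g) (toProjectiveGL2 h) ↔ ∃ c : F, g.1 * h.1 = c • (h.1 * g.1) := by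
  rw [commute_iff_eq, ← map_mul, ← map_mul, toProjectiveGL2_eq_iff]
  rfl

theorem commute_or_mul_eq_neg_mul_of_commute
    (hgh : Commute (toProjectiveGL2 g) (toProjectiveGL2 h)) :
    Commute g h ∨ g.1 * h.1 = -(h.1 * g.1) := by
  obtain ⟨c, hc⟩ := commute_toProjectiveGL2_iff.1 hgh
  have hdet := congr(det $hc)
  rw [det_smul, Fintype.card_fin, det_mul, det_mul, mul_comm h.1.det,
    eq_comm, mul_eq_right₀ (mul_ne_zero g.det_ne_zero h.det_ne_zero), sq_eq_one_iff] at hdet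
  obtain rfl | rfl := hdet
  · exact .inl (Units.ext (by rw [Units.val_mul, hc, one_smul, Units.val_mul]))
  · exact .inr (by rw [hc, neg_one_smul])

theorem trace_eq_zero_of_mul_eq_neg_mul [NeZero (2 : F)] (hgh : g.1 * h.1 = -(h.1 * g.1)) :
    g.1.trace = 0 := by
  have : g.1.trace = -g.1.trace := by
    calc g.1.trace = (g.1 * h.1 * h.inv).trace := by
          rw [Matrix.mul_assoc, h.val_inv, Matrix.mul_one]
      _ = -g.1.trace := by
          rw [hgh, Matrix.neg_mul, trace_neg, trace_mul_cycle, h.inv_val, Matrix.one_mul]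
  exact (mul_eq_zero.1 (by linear_combination this : 2 * g.1.trace = 0)).resolve_left two_ne_zero

theorem mul_self_mem_range_scalar_of_trace_eq_zero {A : Matrix (Fin 2) (Fin 2) F}
    (hA : A.trace = 0) : A * A ∈ Set.range (scalar (Fin 2)) := by
  rw [mul_self_eq_trace_smul_sub_det_smul, hA, zero_smul, zero_sub, ← neg_smul,
    smul_one_eq_diagonal]
  exact ⟨_, rfl⟩

theorem centralizer_toProjectiveGL2_ne_top [NeZero (2 : F)]
    (hg : g.1 ∉ Set.range (scalar (Fin 2))) :
    Subgroup.centralizer {toProjectiveGL2 g} ≠ ⊤ := by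
  intro htop
  refine hg (mem_range_scalar_of_commute_transvectionStruct fun t ↦ ?_)
  let u := GeneralLinearGroup.mkOfDetNeZero t.toMatrix (by simp)
  have hu : u.1 = t.toMatrix := rfl
  have hug : Commute (toProjectiveGL2 u) (toProjectiveGL2 g) :=
    (mem_centralizer_singleton_iff_commute.1 (htop ▸ Subgroup.mem_top _)).symm
  obtain hc | hc := commute_or_mul_eq_neg_mul_of_commute hug
  · exact congr(($hc : GL _ _).1)
  · have := trace_eq_zero_of_mul_eq_neg_mul hc
    rw [hu, TransvectionStruct.toMatrix, transvection, trace_add,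
      trace_single_eq_of_ne _ _ _ t.hij] at this
    simp [two_ne_zero' F] at this

theorem exists_ne_zero_mul_eq_smul_and_mul_eq_smul {n K : Type*} [Fintype n] [DecidableEq n]
    [Field K] {A : Matrix n n K} {l m : K} (hl : (A - l • 1).det = 0) (hm : (A - m • 1).det = 0) :
    ∃ W : Matrix n n K, W ≠ 0 ∧ A * W = l • W ∧ W * A = m • W := by
  obtain ⟨u, hu0, hu⟩ := exists_mulVec_eq_zero_iff.2 hl
  obtain ⟨w, hw0, hw⟩ := exists_vecMul_eq_zero_iff.2 hm
  rw [sub_mulVec, smul_mulVec, one_mulVec, sub_eq_zero] at hu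
  rw [vecMul_sub, vecMul_smul, vecMul_one, sub_eq_zero] at hw
  exact ⟨vecMulVec u w, vecMulVec_ne_zero hu0 hw0,
    by rw [mul_vecMulVec, hu, smul_vecMulVec], by rw [vecMulVec_mul, hw, vecMulVec_smul]⟩

theorem isCyclic_range_of_ker_eq {G H K : Type*} [Group G] [Group H] [Group K] {f : G →* H}
    {χ : G →* K} [IsCyclic χ.range] (h : f.ker = χ.ker) : IsCyclic f.range :=
  ((QuotientGroup.quotientKerEquivRange f).symm.trans
    ((QuotientGroup.quotientMulEquivOfEq h).trans
      (QuotientGroup.quotientKerEquivRange χ))).isCyclic.2 inferInstance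

theorem exists_eq_smul_one_add_smul_of_mem_centralizer [NeZero (2 : F)] (hV : V.1.trace = 0)
    (hh : h ∈ Subgroup.centralizer {V}) : ∃ α β : F, h.1 = α • 1 + β • V.1 :=
  exists_eq_smul_one_add_smul (notMem_range_scalar_of_trace_eq_zero V.ne_zero hV)
    (congr(($(mem_centralizer_singleton_iff_commute.1 hh) : GL _ _).1))

/-- The image in `PGL₂(F)` of the centralizer of `V` in `GL₂(F)`. For non-scalar semisimple `V`
this is a maximal torus. -/
def projectiveTorus (V : GL (Fin 2) F) : Subgroup (ProjectiveGL2 F) :=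
  (Subgroup.centralizer {V}).map toProjectiveGL2

theorem exists_ne_zero_map_mul_eq_smul {E : Type*} [Field E] (φ : F →+* E) {e : E}
    (hV : V.1.trace = 0) (he : φ (-V.1.det) = e * e) : ∃ W : Matrix (Fin 2) (Fin 2) E, W ≠ 0 ∧
      V.1.map φ * W = e • W ∧ W * V.1.map φ = -e • W := by
  have hdet (l : E) (hl : l * l = e * e) : (V.1.map φ - l • 1).det = 0 := by
    have hmap : (V.1.map φ).det = φ V.1.det := (RingHom.map_det φ V.1).symm
    rw [sub_eq_add_neg, add_comm, ← neg_smul, ← one_smul E (V.1.map φ), det_smul_one_add_smul,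
      hmap]
    have htr : (V.1.map φ).trace = 0 := by rw [← AddMonoidHom.map_trace, hV, map_zero]
    rw [htr]
    rw [map_neg] at he
    linear_combination hl - he
  exact exists_ne_zero_mul_eq_smul_and_mul_eq_smul (hdet e rfl) (hdet (-e) (neg_mul_neg e e))

theorem map_mul_eq_smul_and_mul_map_eq_smul {E : Type*} [Field E] (φ : F →+* E)
    {A B : Matrix (Fin 2) (Fin 2) F} {W : Matrix (Fin 2) (Fin 2) E} {l m : E} {α β : F}
    (hl : A.map φ * W = l • W) (hm : W * A.map φ = m • W) (hB : B = α • 1 + β • A) :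
    B.map φ * W = (φ α + φ β * l) • W ∧ W * B.map φ = (φ α + φ β * m) • W := by
  have hBφ : B.map φ = φ α • 1 + φ β • A.map φ := by
    ext i j
    have := congr(φ ($hB i j))
    simpa [Matrix.one_apply, apply_ite φ] using this
  constructor
  · rw [hBφ, Matrix.add_mul, smul_mul, smul_mul, Matrix.one_mul, hl, smul_smul, add_smul]
  · rw [hBφ, Matrix.mul_add, Matrix.mul_smul, Matrix.mul_smul, Matrix.mul_one, hm, smul_smul,
      add_smul]

theorem exists_monoidHom_centralizer_eq_one_iff {E : Type*} [Field E] [NeZero (2 : F)]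
    (φ : F →+* E) {e : E} (hV : V.1.trace = 0) (he : φ (-V.1.det) = e * e) :
    ∃ χ : Subgroup.centralizer {V} →* Eˣ,
      ∀ h, χ h = 1 ↔ h.1.1 ∈ Set.range (scalar (Fin 2)) := by
  obtain ⟨W, hW0, hVW, hWV⟩ := exists_ne_zero_map_mul_eq_smul φ hV he
  let ι := (GeneralLinearGroup.map φ).comp (Subgroup.centralizer {V}).subtype
  have hWι (h) : W * (ι h).1 ≠ 0 := (Units.mul_left_eq_zero (ι h)).not.2 hW0
  have hι {h : Subgroup.centralizer {V}} {α β : F} (hh : h.1.1 = α • 1 + β • V.1) :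
      (ι h).1 * W = (φ α + φ β * e) • W ∧ W * (ι h).1 = (φ α + φ β * -e) • W :=
    map_mul_eq_smul_and_mul_map_eq_smul φ hVW hWV hh
  obtain ⟨χ, hχ⟩ := exists_monoidHom_units_mul_eq_smul ι hW0 fun h ↦ by
    obtain ⟨α, β, hh⟩ := exists_eq_smul_one_add_smul_of_mem_centralizer hV h.2
    obtain ⟨hl, hr⟩ := hι hh
    have hne : φ α + φ β * -e ≠ 0 := fun h0 ↦ hWι h (by rw [hr, h0, zero_smul])
    exact ⟨(φ α + φ β * e) / (φ α + φ β * -e), by rw [hl, hr, smul_smul, div_mul_cancel₀ _ hne]⟩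
  refine ⟨χ, fun h ↦ ?_⟩
  obtain ⟨α, β, hh⟩ := exists_eq_smul_one_add_smul_of_mem_centralizer hV h.2
  obtain ⟨hl, hr⟩ := hι hh
  have he0 : e ≠ 0 := by
    rintro rfl
    simp [V.det_ne_zero] at he
  have h20 : (2 : E) ≠ 0 := by
    rw [← map_ofNat φ 2]
    exact (map_ne_zero φ).2 two_ne_zero
  calc χ h = 1 ↔ (ι h).1 * W = W * (ι h).1 := by
        rw [hχ, ← Units.val_eq_one]
        exact (smul_left_injective E (hWι h)).eq_iff' (one_smul E _) |>.symm
    _ ↔ β = 0 := by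
        rw [hl, hr, (smul_left_injective E hW0).eq_iff, add_right_inj, mul_neg,
          eq_neg_iff_add_eq_zero, ← two_mul]
        simp [h20, he0]
    _ ↔ h.1.1 ∈ Set.range (scalar (Fin 2)) := by
        refine ⟨fun hβ ↦ ⟨α, by simp [hh, hβ, smul_one_eq_diagonal]⟩, fun hsc ↦ ?_⟩
        by_contra hβ
        refine notMem_range_scalar_of_trace_eq_zero V.ne_zero hV ?_
        rw [mem_range_scalar_iff] at hsc ⊢
        simpa [hh, hβ] using hsc

theorem isCyclic_projectiveTorus [Finite F] [NeZero (2 : F)] (hV : V.1.trace = 0) :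
    IsCyclic (projectiveTorus V) := by
  obtain ⟨e, he⟩ := IsAlgClosed.exists_eq_mul_self (algebraMap F (AlgebraicClosure F) (-V.1.det))
  obtain ⟨χ, hχ⟩ := exists_monoidHom_centralizer_eq_one_iff _ hV he
  have hker : (toProjectiveGL2.comp (Subgroup.centralizer {V}).subtype).ker = χ.ker := by
    ext h
    rw [MonoidHom.mem_ker, MonoidHom.mem_ker, hχ, MonoidHom.comp_apply, toProjectiveGL2_eq_one_iff]
    rfl
  rw [projectiveTorus, ← Subgroup.range_subtype (Subgroup.centralizer {V}), ← MonoidHom.range_comp]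
  have : Finite χ.range := Finite.of_surjective _ χ.rangeRestrict_surjective
  exact isCyclic_range_of_ker_eq hker

theorem det_smul_one_add_of_trace_eq_zero (hV : V.1.trace = 0) (a : F) :
    (a • 1 + V.1).det = a ^ 2 + V.1.det := by
  simpa [hV] using det_smul_one_add_smul V.1 a 1

theorem mem_projectiveTorus_iff [NeZero (2 : F)] (hV : V.1.trace = 0) {y : ProjectiveGL2 F} :
    y ∈ projectiveTorus V ↔
      y = 1 ∨ ∃ (g : GL (Fin 2) F) (a : F), g.1 = a • 1 + V.1 ∧ toProjectiveGL2 g = y := by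
  constructor
  · rintro ⟨h, hh, rfl⟩
    obtain ⟨α, β, hαβ⟩ := exists_eq_smul_one_add_smul_of_mem_centralizer hV hh
    by_cases hβ : β = 0
    · exact .inl (toProjectiveGL2_eq_one_iff.2 ⟨α, by simp [hαβ, hβ, smul_one_eq_diagonal]⟩)
    · have hval : h.1 = β • ((α / β) • 1 + V.1) := by
        rw [hαβ, smul_add, smul_smul, mul_div_cancel₀ _ hβ]
      have hdet : ((α / β) • 1 + V.1).det ≠ 0 := fun h0 ↦ h.det_ne_zero <| by
        rw [hval, det_smul, h0, mul_zero]
      exact .inr ⟨.mkOfDetNeZero _ hdet, _, rfl, (toProjectiveGL2_eq_iff.2 ⟨β, hval⟩).symm⟩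
  · rintro (rfl | ⟨g, a, hg, rfl⟩)
    · exact one_mem _
    · refine ⟨g, mem_centralizer_singleton_iff_commute.2 (Units.ext ?_), rfl⟩
      simp [hg, mul_add, add_mul]

theorem eq_of_toProjectiveGL2_eq_of_val_eq [NeZero (2 : F)] (hV : V.1.trace = 0) {a b : F}
    (hg : g.1 = a • 1 + V.1) (hh : h.1 = b • 1 + V.1)
    (hgh : toProjectiveGL2 g = toProjectiveGL2 h) : a = b := by
  obtain ⟨c, hc⟩ := toProjectiveGL2_eq_iff.1 hgh
  rw [hg, hh] at hc
  have hc1 : c = 1 := by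
    by_contra hne
    refine notMem_range_scalar_of_trace_eq_zero V.ne_zero hV ⟨(c * b - a) / (1 - c), ?_⟩
    rw [scalar_apply, ← smul_one_eq_diagonal, div_eq_inv_mul, mul_smul,
      inv_smul_eq_iff₀ (sub_ne_zero.2 (Ne.symm hne)), sub_smul, sub_smul, one_smul, mul_smul,
      sub_eq_sub_iff_add_eq_add, add_comm V.1, hc, smul_add]
  have htr := congr(trace $hc)
  simpa [hc1, hV, two_ne_zero' F] using htr

theorem card_subtype_sq_ne [Fintype F] [DecidableEq F] [NeZero (2 : F)] (d : F) :
    (Nat.card {a : F // a ^ 2 ≠ d} : ℤ) + 1 = Fintype.card F - quadraticChar F d := by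
  have hchar : ringChar F ≠ 2 := fun h ↦ two_ne_zero (α := F) <| by
    exact_mod_cast (ringChar.spec F 2).2 h.dvd
  have hroots := quadraticChar_card_sqrts hchar d
  have hsum := Finset.card_filter_add_card_filter_not (s := Finset.univ) fun a : F ↦ a ^ 2 = d
  rw [Set.toFinset_ofPred] at hroots
  rw [Finset.card_univ] at hsum
  rw [Nat.card_eq_fintype_card, Fintype.card_subtype]
  simp only [ne_eq]
  omega

theorem card_projectiveTorus [Fintype F] [DecidableEq F] [NeZero (2 : F)] (hV : V.1.trace = 0) :
    (Nat.card (projectiveTorus V) : ℤ) = Fintype.card F - quadraticChar F (-V.1.det) := by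
  let u (a : {a : F // a ^ 2 ≠ -V.1.det}) : GL (Fin 2) F := .mkOfDetNeZero (a.1 • 1 + V.1) <| by
    rw [det_smul_one_add_of_trace_eq_zero hV]
    exact fun h ↦ a.2 (eq_neg_of_add_eq_zero_left h)
  have hu (a) : (u a).1 = a.1 • 1 + V.1 := rfl
  have hu1 (a) : toProjectiveGL2 (u a) ≠ 1 := by
    rw [Ne, toProjectiveGL2_eq_one_iff, mem_range_scalar_iff, hu]
    simpa using mem_range_scalar_iff.not.1 (notMem_range_scalar_of_trace_eq_zero V.ne_zero hV)
  have hinj : Function.Injective fun a ↦ toProjectiveGL2 (u a) := fun a b hab ↦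
    Subtype.ext (eq_of_toProjectiveGL2_eq_of_val_eq hV (hu a) (hu b) hab)
  have hT : (projectiveTorus V : Set (ProjectiveGL2 F)) =
      insert 1 (Set.range fun a ↦ toProjectiveGL2 (u a)) := by
    ext y
    rw [SetLike.mem_coe, mem_projectiveTorus_iff hV]
    refine or_congr_right ⟨?_, fun ⟨a, ha⟩ ↦ ⟨u a, a, hu a, ha⟩⟩
    rintro ⟨g, a, hg, rfl⟩
    have ha : a ^ 2 ≠ -V.1.det := fun h0 ↦ g.det_ne_zero <| by
      rw [hg, det_smul_one_add_of_trace_eq_zero hV, h0, neg_add_cancel]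
    exact ⟨⟨a, ha⟩, congrArg _ (Units.ext hg.symm)⟩
  rw [← card_subtype_sq_ne, ← SetLike.coe_sort_coe, Nat.card_coe_set_eq, hT,
    Set.ncard_insert_of_notMem (by simpa using hu1), Set.ncard_range_of_injective hinj,
    Nat.cast_succ]

theorem exists_val_mul_eq_neg_mul (hV : V.1.trace = 0) :
    ∃ w : GL (Fin 2) F, w.1 * V.1 = -(V.1 * w.1) := by
  suffices ∃ W : Matrix (Fin 2) (Fin 2) F, W.det ≠ 0 ∧ W * V.1 = -(V.1 * W) by
    obtain ⟨W, hdet, hW⟩ := this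
    exact ⟨GeneralLinearGroup.mkOfDetNeZero W hdet, hW⟩
  have hV11 : V.1 1 1 = -V.1 0 0 := by
    rw [trace_fin_two] at hV
    linear_combination hV
  by_cases h01 : V.1 0 1 = 0
  · by_cases h10 : V.1 1 0 = 0
    · refine ⟨!![0, 1; 1, 0], by simp, ?_⟩
      ext i j
      fin_cases i <;> fin_cases j <;> simp [mul_apply, *]
    · refine ⟨!![V.1 1 0, -2 * V.1 0 0; 0, -V.1 1 0], by simp [det_fin_two, *], ?_⟩
      ext i j
      fin_cases i <;> fin_cases j <;> simp [mul_apply, *] <;> ring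
  · refine ⟨!![V.1 0 1, 0; -2 * V.1 0 0, -V.1 0 1], by simp [det_fin_two, *], ?_⟩
    ext i j
    fin_cases i <;> fin_cases j <;> simp [mul_apply, *] <;> ring

theorem toProjectiveGL2_mem_projectiveTorus_iff :
    toProjectiveGL2 h ∈ projectiveTorus V ↔ Commute h V := by
  have hker : (toProjectiveGL2 (F := F)).ker ≤ Subgroup.centralizer {V} := by
    rw [QuotientGroup.ker_mk']
    exact Subgroup.center_le_centralizer _
  rw [← mem_centralizer_singleton_iff_commute.trans Commute.symm_iff, projectiveTorus,
    ← Subgroup.mem_comap, Subgroup.comap_map_eq_self hker]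

theorem projectiveTorus_le_centralizer :
    projectiveTorus V ≤ Subgroup.centralizer {toProjectiveGL2 V} := by
  rintro _ ⟨h, hh, rfl⟩
  rw [mem_centralizer_singleton_iff_commute]
  exact Commute.map (mem_centralizer_singleton_iff_commute.1 hh) toProjectiveGL2

theorem toProjectiveGL2_mul_self_of_trace_eq_zero (hV : V.1.trace = 0) :
    toProjectiveGL2 V * toProjectiveGL2 V = 1 := by
  rw [← map_mul, toProjectiveGL2_eq_one_iff]
  exact mul_self_mem_range_scalar_of_trace_eq_zero hV

theorem not_commute_iff_val_mul_eq_neg_mul [NeZero (2 : F)]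
    (hhV : Commute (toProjectiveGL2 h) (toProjectiveGL2 V)) :
    ¬Commute h V ↔ h.1 * V.1 = -(V.1 * h.1) := by
  refine ⟨(commute_or_mul_eq_neg_mul_of_commute hhV).resolve_left, fun hanti hcomm ↦ ?_⟩
  have hself : (V * h).1 = -(V * h).1 := (congrArg Units.val hcomm.eq).symm.trans hanti
  have h2 : (2 : F) • (V * h).1 = 0 := by rw [two_smul, ← eq_neg_iff_add_eq_zero, ← hself]
  exact (V * h).ne_zero ((smul_eq_zero_iff_right two_ne_zero).1 h2)

theorem relIndex_projectiveTorus_centralizer [NeZero (2 : F)] (hV : V.1.trace = 0) :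
    (projectiveTorus V).relIndex (Subgroup.centralizer {toProjectiveGL2 V}) = 2 := by
  obtain ⟨w, hw⟩ := exists_val_mul_eq_neg_mul hV
  have hwV : Commute (toProjectiveGL2 w) (toProjectiveGL2 V) :=
    commute_toProjectiveGL2_iff.2 ⟨-1, by rw [hw, neg_one_smul]⟩
  refine Subgroup.index_eq_two_iff.2 ⟨⟨_, mem_centralizer_singleton_iff_commute.2 hwV.symm⟩, ?_⟩
  rintro ⟨b, hb⟩
  obtain ⟨h, rfl⟩ := toProjectiveGL2_surjective b
  have hhV := (mem_centralizer_singleton_iff_commute.1 hb).symm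
  rw [Subgroup.mem_subgroupOf, Subgroup.mem_subgroupOf, Subgroup.coe_mul, ← map_mul,
    toProjectiveGL2_mem_projectiveTorus_iff, toProjectiveGL2_mem_projectiveTorus_iff,
    xor_comm, xor_iff_iff_not,
    not_commute_iff_val_mul_eq_neg_mul (by rw [map_mul]; exact hhV.mul_left hwV),
    Units.val_mul, Matrix.mul_assoc, hw, Matrix.mul_neg, neg_inj, ← Matrix.mul_assoc,
    ← Matrix.mul_assoc, w.mul_left_inj, commute_iff_eq, Units.ext_iff, Units.val_mul, Units.val_mul]

theorem nonempty_centralizer_mulEquiv_dihedralGroup [Finite F] [NeZero (2 : F)]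
    (hV : V.1.trace = 0) : Nonempty (Subgroup.centralizer {toProjectiveGL2 V} ≃*
      DihedralGroup (Nat.card (projectiveTorus V))) := by
  let e := Subgroup.subgroupOfEquivOfLe (projectiveTorus_le_centralizer (V := V))
  have : IsCyclic ((projectiveTorus V).subgroupOf (Subgroup.centralizer {toProjectiveGL2 V})) :=
    e.isCyclic.2 (isCyclic_projectiveTorus hV)
  rw [← Nat.card_congr e.toEquiv]
  refine nonempty_mulEquiv_dihedralGroup (relIndex_projectiveTorus_centralizer hV) ?_
  rintro ⟨s, hs⟩ hsT
  obtain ⟨h, rfl⟩ := toProjectiveGL2_surjective s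
  rw [Subgroup.mem_subgroupOf, toProjectiveGL2_mem_projectiveTorus_iff,
    not_commute_iff_val_mul_eq_neg_mul (mem_centralizer_singleton_iff_commute.1 hs).symm] at hsT
  exact Subtype.ext
    (toProjectiveGL2_mul_self_of_trace_eq_zero (trace_eq_zero_of_mul_eq_neg_mul hsT))

theorem nonempty_centralizer_mulEquiv_dihedralGroup_card_sub_one_or_card_add_one [Fintype F]
    [NeZero (2 : F)] (hV : V.1.trace = 0) :
    Nonempty (Subgroup.centralizer {toProjectiveGL2 V} ≃* DihedralGroup (Fintype.card F - 1)) ∨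
      Nonempty (Subgroup.centralizer {toProjectiveGL2 V} ≃*
        DihedralGroup (Fintype.card F + 1)) := by
  classical
  have hcard := card_projectiveTorus hV
  refine (quadraticChar_dichotomy (neg_ne_zero.2 V.det_ne_zero)).imp (fun hd ↦ ?_) (fun hd ↦ ?_)
  · have : Nat.card (projectiveTorus V) = Fintype.card F - 1 := by omega
    exact this ▸ nonempty_centralizer_mulEquiv_dihedralGroup hV
  · have : Nat.card (projectiveTorus V) = Fintype.card F + 1 := by omega
    exact this ▸ nonempty_centralizer_mulEquiv_dihedralGroup hV

theorem toProjectiveGL2_mem_socleSL2_of_isSquare_det (hg : IsSquare g.1.det) :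
    toProjectiveGL2 g ∈ socleSL2 F := by
  obtain ⟨a, ha⟩ := hg
  have ha0 : a ≠ 0 := by
    rintro rfl
    exact g.det_ne_zero (by rw [ha, mul_zero])
  have hdet : (a⁻¹ • g.1).det = 1 := by
    rw [det_smul, Fintype.card_fin, ha]
    field_simp
  exact ⟨⟨a⁻¹ • g.1, hdet⟩, toProjectiveGL2_eq_iff.2 ⟨a⁻¹, rfl⟩⟩

theorem trace_eq_zero_of_orderOf_toProjectiveGL2_eq_two
    (hg : orderOf (toProjectiveGL2 g) = 2) : g.1.trace = 0 := by
  obtain ⟨hsq, hne⟩ := orderOf_eq_prime_iff.1 hg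
  rw [sq, ← map_mul, toProjectiveGL2_eq_one_iff] at hsq
  exact trace_eq_zero_of_mul_self_mem_range_scalar (toProjectiveGL2_eq_one_iff.not.1 hne) hsq

theorem exists_le_centralizer_of_mem [Finite F] [NeZero (2 : F)]
    (hF : ∀ c : F, ¬ IsSquare c → Subring.closure {c} = ⊤) (hneg : IsSquare (-1 : F))
    (h2 : IsSquare (2 : F)) {M : Subgroup (ProjectiveGL2 F)} (hM : M ≠ ⊤) {x : ProjectiveGL2 F}
    (hxM : x ∈ M) (hx : orderOf x = 2) (hxS : x ∉ socleSL2 F) :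
    ∃ V : GL (Fin 2) F, V.1.trace = 0 ∧ M ≤ Subgroup.centralizer {toProjectiveGL2 V} := by
  obtain ⟨X, rfl⟩ := toProjectiveGL2_surjective x
  have hH : M.comap toProjectiveGL2 ≠ ⊤ := fun h ↦ hM <|
    Subgroup.comap_injective toProjectiveGL2_surjective (h.trans (Subgroup.comap_top _).symm)
  have hZ : Subgroup.center (GL (Fin 2) F) ≤ M.comap toProjectiveGL2 :=
    (QuotientGroup.ker_mk' (Subgroup.center (GL (Fin 2) F))).ge.trans (M.ker_le_comap _)
  obtain ⟨g, hg, hdisc, hN⟩ := exists_normalizer_centralizer_eq_top hF hneg h2 hH hZ hxM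
    (trace_eq_zero_of_orderOf_toProjectiveGL2_eq_two hx)
    fun hdet ↦ hxS (toProjectiveGL2_mem_socleSL2_of_isSquare_det hdet)
  have hV : (tracelessPart g.1.1).det ≠ 0 := fun h0 ↦ hdisc <| by
    simpa [h0, eq_comm (a := (0 : F))] using congr(det $(tracelessPart_mul_self g.1.1))
  refine ⟨.mkOfDetNeZero _ hV, trace_tracelessPart _, fun y hy ↦ ?_⟩
  obtain ⟨h, rfl⟩ := toProjectiveGL2_surjective y
  rw [mem_centralizer_singleton_iff_commute, Commute.symm_iff, commute_toProjectiveGL2_iff]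
  exact (mem_normalizer_centralizer_iff_exists (h := ⟨h, hy⟩) hg).1 (hN ▸ Subgroup.mem_top _)

theorem exists_eq_centralizer_of_isCoatom [Finite F] [NeZero (2 : F)]
    (hF : ∀ c : F, ¬ IsSquare c → Subring.closure {c} = ⊤) (hneg : IsSquare (-1 : F))
    (h2 : IsSquare (2 : F)) {M : Subgroup (ProjectiveGL2 F)} (hM : IsCoatom M)
    {x : ProjectiveGL2 F} (hxM : x ∈ M) (hx : orderOf x = 2) (hxS : x ∉ socleSL2 F) :
    ∃ V : GL (Fin 2) F, V.1.trace = 0 ∧ M = Subgroup.centralizer {toProjectiveGL2 V} := by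
  obtain ⟨V, hV, hMV⟩ := exists_le_centralizer_of_mem hF hneg h2 hM.1 hxM hx hxS
  have hne := centralizer_toProjectiveGL2_ne_top (notMem_range_scalar_of_trace_eq_zero V.ne_zero hV)
  exact ⟨V, hV, ((hM.le_iff.1 hMV).resolve_left hne).symm⟩

end ProjectiveGL2

/-- Every maximal subgroup of `PGL₂(q)` containing an outer involution is dihedral
of order `2(q-1)` or `2(q+1)`. -/
theorem maximal_subgroup_containing_outer_involution (p n : ℕ) (hp : Nat.Prime p) (hodd : Odd p) (hn : 1 ≤ n)
    (F : Type) [Field F] [Fintype F] (hF : Fintype.card F = p ^ 2 ^ n)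
    (x : ProjectiveGL2 F) (hx : orderOf x = 2) (hxS : x ∉ socleSL2 F)
    (M : Subgroup (ProjectiveGL2 F)) (hM : IsCoatom M) (hxM : x ∈ M) :
    Nonempty (M ≃* DihedralGroup (p ^ 2 ^ n - 1)) ∨
      Nonempty (M ≃* DihedralGroup (p ^ 2 ^ n + 1)) := by
  have hmod : Fintype.card F % 8 = 1 := hF ▸ odd_pow_two_pow_mod_eight hodd (by omega)
  have : NeZero (2 : F) := ⟨Ring.two_ne_zero fun h ↦ by
    have := FiniteField.even_card_of_char_two h
    omega⟩
  have hneg : IsSquare (-1 : F) := FiniteField.isSquare_neg_one_iff.2 (by omega)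
  have h2 : IsSquare (2 : F) := FiniteField.isSquare_two_iff.2 (by omega)
  obtain ⟨V, hV, rfl⟩ := exists_eq_centralizer_of_isCoatom
    (fun c ↦ closure_singleton_eq_top_of_not_isSquare hp hodd hF) hneg h2 hM hxM hx hxS
  rw [← hF]
  exact nonempty_centralizer_mulEquiv_dihedralGroup_card_sub_one_or_card_add_one hV
end

section
/- Let p be an odd prime, n ≥ 1, q = p^(2^n), and G = PGL₂(F_q). Fix an involution x ∈ G not lying in the image of SL₂(F_q) in G. Then the number of subgroups of G isomorphic to the dihedral group of order 2(q+1) that contain x is exactly 1 + (q+1)/2, and exactly one of them is the centralizer C_G(x). -/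
open Matrix

/-!
Let `-1` be a square in `F`, where `F` has `q` elements. An involution of `PGL₂(F)` is the class of
a traceless matrix `A`, and it is outer exactly when `F[A]` is a field. Every matrix commuting with
`A` up to a scalar commutes or anticommutes with it. The former matrices give the torus
`F[A]ˣ / Fˣ`, which is cyclic of order `q + 1` and has the class of `A` as its only involution; the
latter are traceless, so they give `q + 1` involutions inverting the torus. Hence the centralizer
of an outer involution is dihedral of order `2 (q + 1)`.

Conversely, a dihedral subgroup of order `2 (q + 1)` centralizes the involution `z` of its rotation
subgroup. This `z` is outer, because an element with an inner involution among its powers lies in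
the split torus of that involution and so has order dividing `q - 1`. By comparing orders, the
subgroup is the centralizer of `z`. So the subgroups in question correspond to the outer involutions
commuting with `x`. These are `x` itself and the elements outside the socle among the `q + 1`
involutions inverting the torus of `x`; multiplication by `x` exchanges these with the elements
inside the socle, so they are half of the total.
-/

section Group

variable {G : Type*} [Group G]

/-- The homomorphism out of a dihedral group with prescribed values on rotations and on one
reflection; the reflection `sr i` is sent to `s * f i`. -/
def dihedralLift {m : ℕ} (f : Multiplicative (ZMod m) →* G) (s : G) (hs : s * s = 1)
    (hfs : ∀ i, f i * s = s * (f i)⁻¹) : DihedralGroup m →* G where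
  toFun
    | .r i => f (.ofAdd i)
    | .sr i => s * f (.ofAdd i)
  map_one' := f.map_one
  map_mul' := by
    have hss (g : G) : s * (s * g) = g := by rw [← mul_assoc, hs, one_mul]
    have hfs' (i) (g : G) : f i * (s * g) = s * ((f i)⁻¹ * g) := by
      rw [← mul_assoc, hfs, mul_assoc]
    rintro (i | i) (j | j)
    · exact f.map_mul _ _
    · simp [sub_eq_neg_add, ofAdd_add, hfs']
    · simp [ofAdd_add, mul_assoc]
    · simp [sub_eq_neg_add, ofAdd_add, mul_assoc, hfs', hss]

theorem dihedralLift_injective {m : ℕ} {f : Multiplicative (ZMod m) →* G} {s : G}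
    (hs : s * s = 1) (hfs : ∀ i, f i * s = s * (f i)⁻¹) (hf : Function.Injective f)
    (hsf : s ∉ f.range) : Function.Injective (dihedralLift f s hs hfs) := by
  refine (injective_iff_map_eq_one _).2 ?_
  rintro (i | i) hi
  · exact congrArg DihedralGroup.r (hf (hi.trans f.map_one.symm))
  · refine absurd ?_ hsf
    rw [eq_inv_of_mul_eq_one_left hi]
    exact f.range.inv_mem ⟨_, rfl⟩

theorem nonempty_mulEquiv_dihedralGroup_of_index_two {T : Subgroup G} [IsCyclic T]
    (hT : T.index = 2) (hsq : ∀ g ∉ T, g * g = 1) :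
    Nonempty (G ≃* DihedralGroup (Nat.card T)) := by
  obtain ⟨s, hs⟩ : ∃ s, s ∉ T := by
    by_contra! h
    simp [(Subgroup.eq_top_iff' T).2 h] at hT
  let e : Multiplicative (ZMod (Nat.card T)) ≃* T := zmodCyclicMulEquiv inferInstance
  let f : Multiplicative (ZMod (Nat.card T)) →* G := T.subtype.comp e.toMonoidHom
  have range_f : f.range = T := by
    rw [MonoidHom.range_comp, (MonoidHom.range_eq_top (f := e.toMonoidHom)).2 e.surjective,
      ← MonoidHom.range_eq_map, Subgroup.range_subtype]
  have hfs (i) : f i * s = s * (f i)⁻¹ := by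
    have hfsT : f i * s ∉ T := by
      rwa [T.mul_mem_cancel_left (range_f.le ⟨i, rfl⟩)]
    have h := hsq _ hfsT
    rw [eq_inv_of_mul_eq_one_left h, _root_.mul_inv_rev, inv_eq_of_mul_eq_one_left (hsq s hs)]
  have hsf : s ∉ f.range := by rwa [range_f]
  refine ⟨(MulEquiv.ofBijective (dihedralLift f s (hsq s hs) hfs)
    ⟨dihedralLift_injective _ _ (T.subtype_injective.comp e.injective) hsf,
      fun g ↦ ?_⟩).symm⟩
  by_cases hg : g ∈ T
  · obtain ⟨i, rfl⟩ := range_f.ge hg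
    exact ⟨.r i.toAdd, rfl⟩
  · obtain ⟨i, hi⟩ := range_f.ge ((Subgroup.mul_mem_iff_of_index_two hT).2 (iff_of_false hs hg))
    refine ⟨.sr i.toAdd, ?_⟩
    change s * f i = g
    rw [hi, ← mul_assoc, hsq s hs, one_mul]

theorem two_mul_ncard_diff_of_index_two {N : Subgroup G} (hN : N.index = 2) {x : G} (hx : x ∉ N)
    {W : Set G} (hW : W.Finite) (hxW : ∀ w ∈ W, x * w ∈ W) :
    2 * (W \ N).ncard = W.ncard := by
  have le {A B : Set G} (hB : B ⊆ W) (h : ∀ w ∈ A, x * w ∈ B) : A.ncard ≤ B.ncard :=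
    Set.ncard_le_ncard_of_injOn (x * ·) h (mul_right_injective x).injOn (hW.subset hB)
  have h₁ : (W ∩ N).ncard ≤ (W \ N).ncard :=
    le Set.sdiff_subset fun w hw ↦ ⟨hxW w hw.1, by
      simpa [Subgroup.mul_mem_iff_of_index_two hN, hx] using hw.2⟩
  have h₂ : (W \ N).ncard ≤ (W ∩ N).ncard :=
    le Set.inter_subset_left fun w hw ↦ ⟨hxW w hw.1, by
      simpa [Subgroup.mul_mem_iff_of_index_two hN, hx] using hw.2⟩
  have := Set.ncard_inter_add_ncard_sdiff_eq_ncard W N hW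
  omega

theorem dihedralGroup_r_mem_center (k : ℕ) :
    (DihedralGroup.r (k : ZMod (2 * k))) ∈ Subgroup.center (DihedralGroup (2 * k)) := by
  have h : (k : ZMod (2 * k)) + k = 0 := by
    rw [← two_mul]; exact_mod_cast ZMod.natCast_self (2 * k)
  rw [Subgroup.mem_center_iff]
  rintro (i | i)
  · rw [DihedralGroup.r_mul_r, DihedralGroup.r_mul_r, add_comm]
  · rw [DihedralGroup.r_mul_sr, DihedralGroup.sr_mul_r, sub_eq_add_neg,
      ← eq_neg_of_add_eq_zero_left h]

theorem exists_orderOf_eq_and_le_centralizer_pow {H : Subgroup G} {k : ℕ}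
    (e : H ≃* DihedralGroup (2 * k)) :
    ∃ r : G, orderOf r = 2 * k ∧ H ≤ Subgroup.centralizer {r ^ k} := by
  refine ⟨e.symm (.r 1), ?_, fun h hh ↦ ?_⟩
  · rw [Subgroup.orderOf_coe, e.symm.orderOf_eq, DihedralGroup.orderOf_r_one]
  · have hcomm : e ⟨h, hh⟩ * .r 1 ^ k = .r 1 ^ k * e ⟨h, hh⟩ := by
      rw [DihedralGroup.r_one_pow]
      exact Subgroup.mem_center_iff.1 (dihedralGroup_r_mem_center k) _
    have hcomm' := congrArg (fun g ↦ (e.symm g : G)) hcomm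
    simp only [map_mul, map_pow, MulEquiv.symm_apply_apply, Subgroup.coe_mul,
      Subgroup.coe_pow] at hcomm'
    exact Subgroup.mem_centralizer_singleton_iff.2 hcomm'

end Group

section QuadraticAlgebra

variable {F : Type*} [Field F] [Fintype F]

theorem quadraticAlgebra_pow_card {a b r s : F} (hr : r * r = a + b * r) (hs : s * s = a + b * s)
    (hrs : r ≠ s) (z : QuadraticAlgebra F a b) : z ^ Fintype.card F = z := by
  let evalRoots : QuadraticAlgebra F a b →ₐ[F] F × F :=
    QuadraticAlgebra.lift ⟨(r, s), by ext <;> simp [hr, hs]⟩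
  have evalRoots_injective : Function.Injective evalRoots := by
    refine (injective_iff_map_eq_zero _).2 fun w hw ↦ ?_
    have hwr : w.re + w.im * r = 0 := by simpa [evalRoots] using congrArg Prod.fst hw
    have hws : w.re + w.im * s = 0 := by simpa [evalRoots] using congrArg Prod.snd hw
    have im_eq_zero : w.im = 0 := by
      refine (mul_eq_zero.1 ?_).resolve_right (sub_ne_zero.2 hrs)
      linear_combination hwr - hws
    ext
    · simpa [im_eq_zero] using hwr
    · exact im_eq_zero
  refine evalRoots_injective ?_
  ext <;> simp [FiniteField.pow_card]

theorem card_range_eq_card_add_one_of_ker_eq {K G : Type*} [Field K] [Algebra F K] [Group G]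
    (hK : Module.finrank F K = 2) (φ : Kˣ →* G)
    (hφ : φ.ker = (Units.map (algebraMap F K : F →* K)).range) :
    Nat.card φ.range = Fintype.card F + 1 := by
  have : FiniteDimensional F K := .of_finrank_pos (by lia)
  have : Finite K := Module.finite_of_finite F
  have card_ker : Nat.card φ.ker = Nat.card Fˣ := by
    rw [hφ]
    exact (Nat.card_congr (MonoidHom.ofInjective
      (Units.map_injective (algebraMap F K).injective)).toEquiv).symm
  have card_K : Nat.card K = Nat.card F ^ 2 := hK ▸ Module.natCard_eq_pow_finrank
  have card_mul := φ.ker.card_mul_index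
  rw [Subgroup.index_ker, card_ker] at card_mul
  have hF := Nat.card_eq_card_units_add_one F
  have hKu := Nat.card_eq_card_units_add_one K
  rw [← Nat.card_eq_fintype_card]
  refine Nat.eq_of_mul_eq_mul_left (Nat.card_pos (α := Fˣ)) ?_
  rw [card_mul]
  nlinarith

end QuadraticAlgebra

theorem ringChar_ne_two (R : Type*) [NonAssocSemiring R] [NeZero (2 : R)] : ringChar R ≠ 2 :=
  fun h ↦ two_ne_zero (α := R) (by rw [← Nat.cast_two, ← h, CharP.cast_eq_zero])

theorem isSquare_mul_iff_not_isSquare {F : Type*} [Field F] [Finite F] {a b : F}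
    (ha : ¬ IsSquare a) (hb : b ≠ 0) : IsSquare (b * a) ↔ ¬ IsSquare b := by
  classical
  have := Fintype.ofFinite F
  have ha0 : a ≠ 0 := fun h ↦ ha (h ▸ IsSquare.zero)
  rw [← quadraticChar_one_iff_isSquare (mul_ne_zero hb ha0), map_mul,
    quadraticChar_neg_one_iff_not_isSquare.2 ha, mul_neg_one, neg_eq_iff_eq_neg,
    quadraticChar_neg_one_iff_not_isSquare]

section Matrix

theorem trace_eq_zero_of_mul_eq_neg_mul_s8 {R ι : Type*} [Fintype ι] [DecidableEq ι] [CommRing R]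
    [IsDomain R] [NeZero (2 : R)] {A : Matrix ι ι R} (B : (Matrix ι ι R)ˣ)
    (h : A * B = -(B * A)) : A.trace = 0 := by
  have h' : A = -(B * A * (B⁻¹ : (Matrix ι ι R)ˣ)) := by
    rw [← neg_mul, ← h, Units.mul_inv_cancel_right]
  have trace_eq_neg : A.trace = -A.trace := by
    nth_rw 1 [h']
    rw [Matrix.trace_neg, Matrix.trace_units_conj]
  refine (mul_eq_zero.1 ?_).resolve_left (two_ne_zero (α := R))
  linear_combination trace_eq_neg

theorem mul_self_fin_two {R : Type*} [CommRing R] (A : Matrix (Fin 2) (Fin 2) R) :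
    A * A = (-A.det) • 1 + A.trace • A := by
  ext i j
  fin_cases i <;> fin_cases j <;>
    simp [Matrix.mul_apply, Matrix.det_fin_two, Matrix.trace_fin_two] <;> ring

/-- Evaluation at `A` of the quadratic algebra `R[X] / (X² - tr A * X + det A)`, which is well
defined by the Cayley–Hamilton theorem; its range is the algebra `R[A]`. -/
def cayleyHamiltonHom {R : Type*} [CommRing R] (A : Matrix (Fin 2) (Fin 2) R) :
    QuadraticAlgebra R (-A.det) A.trace →ₐ[R] Matrix (Fin 2) (Fin 2) R :=
  QuadraticAlgebra.lift ⟨A, mul_self_fin_two A⟩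

theorem cayleyHamiltonHom_apply {R : Type*} [CommRing R] (A : Matrix (Fin 2) (Fin 2) R)
    (z : QuadraticAlgebra R (-A.det) A.trace) :
    cayleyHamiltonHom A z = z.re • 1 + z.im • A :=
  rfl

theorem exists_smul_eq_of_crossProduct_eq_zero {F : Type*} [Field F] {v w : Fin 3 → F}
    (hv : v ≠ 0) (h : crossProduct v w = 0) : ∃ c : F, c • v = w := by
  by_contra! hc
  exact crossProduct_ne_zero_iff_linearIndependent.2 ((LinearIndependent.pair_iff' hv).2 hc) h

theorem commute_iff_mem_range_cayleyHamiltonHom {F : Type*} [Field F]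
    {A B : Matrix (Fin 2) (Fin 2) F} (hA : A ∉ Set.range (Matrix.scalar (Fin 2))) :
    Commute A B ↔ B ∈ (cayleyHamiltonHom A).range := by
  refine ⟨fun h ↦ ?_, ?_⟩
  · let offScalar (M : Matrix (Fin 2) (Fin 2) F) : Fin 3 → F := ![M 0 1, M 1 0, M 0 0 - M 1 1]
    have offScalar_ne_zero : offScalar A ≠ 0 := fun h0 ↦ hA ⟨A 0 0, by
      have h01 : A 0 1 = 0 := congrFun h0 0
      have h10 : A 1 0 = 0 := congrFun h0 1
      have h11 : A 0 0 = A 1 1 := sub_eq_zero.1 (congrFun h0 2)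
      ext i j
      fin_cases i <;> fin_cases j <;> simp [h01, h10, h11]⟩
    have cross_eq_zero : crossProduct (offScalar A) (offScalar B) = 0 := by
      have h00 := congrFun₂ h.eq 0 0
      have h01 := congrFun₂ h.eq 0 1
      have h10 := congrFun₂ h.eq 1 0
      simp only [Matrix.mul_apply, Fin.sum_univ_two] at h00 h01 h10
      rw [cross_apply]
      ext i
      fin_cases i <;> simp [offScalar] <;> grind
    obtain ⟨v, hv⟩ := exists_smul_eq_of_crossProduct_eq_zero offScalar_ne_zero cross_eq_zero
    have h01 : v * A 0 1 = B 0 1 := congrFun hv 0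
    have h10 : v * A 1 0 = B 1 0 := congrFun hv 1
    have h11 : v * (A 0 0 - A 1 1) = B 0 0 - B 1 1 := congrFun hv 2
    refine ⟨⟨B 0 0 - v * A 0 0, v⟩, (cayleyHamiltonHom_apply A _).trans ?_⟩
    ext i j
    fin_cases i <;> fin_cases j <;> simp <;> grind
  · rintro ⟨z, hz⟩
    obtain rfl : z.re • 1 + z.im • A = B := (cayleyHamiltonHom_apply A z).symm.trans hz
    exact ((Commute.one_right A).smul_right _).add_right ((Commute.refl A).smul_right _)

end Matrix

namespace ProjectiveGL2

variable {F : Type} [Field F]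

/-- The class in `PGL₂(F)` of an invertible matrix. -/
abbrev toPGL2 : GL (Fin 2) F →* ProjectiveGL2 F :=
  QuotientGroup.mk' (Subgroup.center (GL (Fin 2) F))

theorem toPGL2_surjective : Function.Surjective (toPGL2 (F := F)) :=
  QuotientGroup.mk'_surjective _

theorem toPGL2_eq_iff {A B : GL (Fin 2) F} : toPGL2 A = toPGL2 B ↔ ∃ c : Fˣ, c • A = B := by
  refine (Matrix.ProjGenLinGroup.mk_eq_mk_iff (g₁ := A) (g₂ := B)).trans ?_
  refine exists_congr fun c ↦ Eq.congr_left ?_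
  ext i j
  simp [mul_comm, Units.smul_def]

theorem toPGL2_smul (c : Fˣ) (A : GL (Fin 2) F) : toPGL2 (c • A) = toPGL2 A :=
  (toPGL2_eq_iff.2 ⟨c, rfl⟩).symm

theorem toPGL2_neg (A : GL (Fin 2) F) : toPGL2 (-A) = toPGL2 A :=
  (toPGL2_eq_iff.2 ⟨-1, by ext; simp⟩).symm

theorem det_smul_fin_two (c : Fˣ) (A : GL (Fin 2) F) :
    (c • A).val.det = c ^ 2 * A.val.det := by
  change ((c : F) • A.val).det = _
  simp

theorem toPGL2_mem_socleSL2_iff {A : GL (Fin 2) F} :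
    toPGL2 A ∈ socleSL2 F ↔ IsSquare A.val.det := by
  constructor
  · rintro ⟨S, hS⟩
    obtain ⟨c, hc⟩ := toPGL2_eq_iff.1 hS
    refine ⟨c, ?_⟩
    rw [← hc, det_smul_fin_two, Matrix.SpecialLinearGroup.coe_GL_coe_matrix, S.det_coe, mul_one, sq]
  · rintro ⟨d, hd⟩
    have hd0 : d ≠ 0 := by
      rintro rfl
      exact A.det_ne_zero (by simpa using hd)
    obtain ⟨c, rfl⟩ := hd0.isUnit
    have hc : (c⁻¹ • A).val.det = 1 := by
      rw [det_smul_fin_two, hd, ← sq, ← mul_pow, c.inv_mul, one_pow]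
    have hS : Matrix.SpecialLinearGroup.toGL ⟨_, hc⟩ = c⁻¹ • A := Units.ext rfl
    exact ⟨⟨_, hc⟩, (congrArg toPGL2 hS).trans (toPGL2_smul c⁻¹ A)⟩

theorem socleSL2_index [Finite F] [NeZero (2 : F)] : (socleSL2 F).index = 2 := by
  obtain ⟨d, hd⟩ := FiniteField.exists_nonsquare (ringChar_ne_two F)
  have hd0 : d ≠ 0 := fun h ↦ hd (h ▸ IsSquare.zero)
  let D : GL (Fin 2) F := .mkOfDetNeZero (.diagonal ![d, 1]) (by simpa using hd0)
  have det_D : D.val.det = d := by simp [D, GeneralLinearGroup.mkOfDetNeZero]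
  refine Subgroup.index_eq_two_iff.2 ⟨toPGL2 D, fun b ↦ ?_⟩
  obtain ⟨B, rfl⟩ := toPGL2_surjective b
  rw [← map_mul, toPGL2_mem_socleSL2_iff, toPGL2_mem_socleSL2_iff, xor_iff_iff_not, Units.val_mul,
    Matrix.det_mul, det_D, isSquare_mul_iff_not_isSquare hd B.det_ne_zero]

theorem toPGL2_eq_one_iff {A : GL (Fin 2) F} :
    toPGL2 A = 1 ↔ A.val ∈ Set.range (Matrix.scalar (Fin 2)) :=
  (QuotientGroup.eq_one_iff A).trans GeneralLinearGroup.mem_center_iff_val_mem_range_scalar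

theorem trace_eq_zero_of_orderOf_eq_two {A : GL (Fin 2) F} (hA : orderOf (toPGL2 A) = 2) :
    A.val.trace = 0 := by
  by_contra trace_ne_zero
  obtain ⟨sq_eq_one, ne_one⟩ := orderOf_eq_prime_iff.1 hA
  rw [← map_pow, toPGL2_eq_one_iff] at sq_eq_one
  obtain ⟨c, hc⟩ := sq_eq_one
  have trace_smul : A.val.trace • A.val = (c + A.val.det) • 1 := by
    rw [add_smul, Matrix.smul_one_eq_diagonal c, ← Matrix.scalar_apply, hc,
      Units.val_pow_eq_pow_val, sq, mul_self_fin_two]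
    module
  refine ne_one (toPGL2_eq_one_iff.2 ⟨A.val.trace⁻¹ * (c + A.val.det), ?_⟩)
  rw [Matrix.scalar_apply, ← Matrix.smul_one_eq_diagonal, mul_smul, ← trace_smul,
    inv_smul_smul₀ trace_ne_zero]

theorem toPGL2_mul_self_of_trace_eq_zero {A : GL (Fin 2) F} (hA : A.val.trace = 0) :
    toPGL2 A * toPGL2 A = 1 := by
  rw [← map_mul, toPGL2_eq_one_iff, Units.val_mul, mul_self_fin_two, hA, zero_smul, add_zero,
    Matrix.smul_one_eq_diagonal]
  exact ⟨_, rfl⟩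

theorem commute_toPGL2_iff {A B : GL (Fin 2) F} :
    Commute (toPGL2 A) (toPGL2 B) ↔ Commute A B ∨ A * B = -(B * A) := by
  rw [commute_iff_eq, ← map_mul, ← map_mul]
  refine ⟨fun h ↦ ?_, ?_⟩
  · obtain ⟨c, hc⟩ := toPGL2_eq_iff.1 h.symm
    have c_sq : (c : F) ^ 2 = 1 := by
      have hdet := congrArg (fun M : GL (Fin 2) F ↦ M.val.det) hc
      simp only [det_smul_fin_two, Units.val_mul, Matrix.det_mul] at hdet
      refine mul_right_cancel₀ (mul_ne_zero A.det_ne_zero B.det_ne_zero) ?_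
      linear_combination hdet
    refine (sq_eq_one_iff.1 c_sq).imp (fun hc1 ↦ ?_) fun hc1 ↦ ?_
    · obtain rfl : c = 1 := Units.ext hc1
      exact hc.symm.trans (one_smul _ _)
    · obtain rfl : c = -1 := Units.ext hc1
      rw [← hc]
      ext
      simp
  · rintro (h | h)
    · rw [h.eq]
    · rw [h, toPGL2_neg]

/-- The image in `PGL₂(F)` of the centralizer of `A`, i.e. of the invertible elements of `F[A]`
when `A` is not scalar. -/
def torus (A : GL (Fin 2) F) : Subgroup (ProjectiveGL2 F) :=
  (Subgroup.centralizer {A}).map toPGL2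

theorem toPGL2_mem_torus_iff {A B : GL (Fin 2) F} : toPGL2 B ∈ torus A ↔ Commute A B := by
  refine ⟨?_, fun h ↦ ⟨B, Subgroup.mem_centralizer_singleton_iff.2 h.symm.eq, rfl⟩⟩
  rintro ⟨C, hC, hCB⟩
  obtain ⟨c, rfl⟩ := toPGL2_eq_iff.1 hCB
  have hAC : Commute A C := (Subgroup.mem_centralizer_singleton_iff.1 hC).symm
  refine Commute.units_val_iff.1 ?_
  exact (Commute.units_val_iff.2 hAC).smul_right (c : F)

theorem torus_le_centralizer (A : GL (Fin 2) F) :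
    torus A ≤ Subgroup.centralizer {toPGL2 A} := by
  rintro _ ⟨B, hB, rfl⟩
  rw [Subgroup.mem_centralizer_singleton_iff, ← map_mul, ← map_mul,
    Subgroup.mem_centralizer_singleton_iff.1 hB]

section FieldTorus

variable {A : GL (Fin 2) F} [hA : Fact (∀ r : F, r ^ 2 ≠ -A.val.det + A.val.trace * r)]

theorem notMem_range_scalar : A.val ∉ Set.range (Matrix.scalar (Fin 2)) := by
  rintro ⟨r, hr⟩
  refine hA.out r ?_
  rw [← hr]
  simp only [Matrix.scalar_apply, Matrix.det_diagonal, Matrix.trace_diagonal, Fin.sum_univ_two,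
    Fin.prod_univ_two]
  ring

/-- The homomorphism `F(A)ˣ → PGL₂(F)`. -/
def unitsToTorus (A : GL (Fin 2) F) :
    (QuadraticAlgebra F (-A.val.det) A.val.trace)ˣ →* ProjectiveGL2 F :=
  toPGL2.comp (Units.map (cayleyHamiltonHom A.val))

theorem range_unitsToTorus : (unitsToTorus A).range = torus A := by
  apply le_antisymm
  · rintro _ ⟨z, rfl⟩
    refine toPGL2_mem_torus_iff.2 (Commute.units_val_iff.1 ?_)
    exact (commute_iff_mem_range_cayleyHamiltonHom notMem_range_scalar).2 ⟨z, rfl⟩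
  · rintro _ ⟨B, hB, rfl⟩
    have hAB : Commute A.val B.val :=
      Commute.units_val_iff.2 (Subgroup.mem_centralizer_singleton_iff.1 hB).symm
    obtain ⟨z, hz⟩ := (commute_iff_mem_range_cayleyHamiltonHom notMem_range_scalar).1 hAB
    have z_ne_zero : z ≠ 0 := by
      rintro rfl
      exact B.ne_zero (hz.symm.trans (map_zero _))
    exact ⟨Units.mk0 z z_ne_zero, congrArg toPGL2 (Units.ext hz)⟩

theorem ker_unitsToTorus : (unitsToTorus A).ker =
    (Units.map (algebraMap F (QuadraticAlgebra F (-A.val.det) A.val.trace) : F →* _)).range := by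
  have algebraMap_eq_scalar (c : F) :
      cayleyHamiltonHom A.val (algebraMap F _ c) = Matrix.scalar (Fin 2) c :=
    (cayleyHamiltonHom A.val).commutes c
  ext z
  refine MonoidHom.mem_ker.trans (toPGL2_eq_one_iff.trans ⟨?_, ?_⟩)
  · rintro ⟨c, hc⟩
    have hcz : algebraMap F _ c = z.val :=
      (cayleyHamiltonHom A.val).toRingHom.injective ((algebraMap_eq_scalar c).trans hc)
    have c_ne_zero : c ≠ 0 := by
      rintro rfl
      exact z.ne_zero (hcz.symm.trans (map_zero _))
    exact ⟨Units.mk0 c c_ne_zero, Units.ext hcz⟩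
  · rintro ⟨c, rfl⟩
    exact ⟨c, (algebraMap_eq_scalar c).symm⟩

theorem isCyclic_torus [Finite F] : IsCyclic (torus A) := by
  rw [← range_unitsToTorus]
  have : Finite (QuadraticAlgebra F (-A.val.det) A.val.trace) := Module.finite_of_finite F
  exact isCyclic_of_surjective _ (unitsToTorus A).rangeRestrict_surjective

theorem card_torus [Fintype F] : Nat.card (torus A) = Fintype.card F + 1 := by
  rw [← range_unitsToTorus]
  exact card_range_eq_card_add_one_of_ker_eq (QuadraticAlgebra.finrank_eq_two _ _) _
    ker_unitsToTorus

end FieldTorus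

section AnticommutingPairs

variable [NeZero (2 : F)] {A : GL (Fin 2) F}

theorem not_commute_of_mul_eq_neg_mul {B : GL (Fin 2) F} (h : A * B = -(B * A)) :
    ¬ Commute A B := by
  intro hcomm
  have two_smul_eq_zero : (2 : F) • (A * B).val = 0 := by
    rw [two_smul]
    nth_rw 1 [h]
    rw [hcomm.eq, Units.val_neg, neg_add_cancel]
  exact (A * B).ne_zero ((smul_eq_zero.1 two_smul_eq_zero).resolve_left two_ne_zero)

theorem mul_self_eq_one_of_mem_centralizer_of_notMem_torus {w : ProjectiveGL2 F}
    (hw : w ∈ Subgroup.centralizer {toPGL2 A}) (hwA : w ∉ torus A) : w * w = 1 := by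
  obtain ⟨B, rfl⟩ := toPGL2_surjective w
  have hAB : A * B = -(B * A) :=
    (commute_toPGL2_iff.1 (Subgroup.mem_centralizer_singleton_iff.1 hw).symm).resolve_left
      (mt toPGL2_mem_torus_iff.2 hwA)
  refine toPGL2_mul_self_of_trace_eq_zero (trace_eq_zero_of_mul_eq_neg_mul_s8 A ?_)
  exact congrArg Units.val (neg_eq_iff_eq_neg.2 hAB).symm

theorem relIndex_torus_eq_two {S : GL (Fin 2) F} (hS : A * S = -(S * A)) :
    (torus A).relIndex (Subgroup.centralizer {toPGL2 A}) = 2 := by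
  refine Subgroup.relIndex_eq_two_iff.2 ⟨toPGL2 S, ?_, fun b hb ↦ ?_⟩
  · exact Subgroup.mem_centralizer_singleton_iff.2 (commute_toPGL2_iff.2 (.inr hS)).symm.eq
  · obtain ⟨B, rfl⟩ := toPGL2_surjective b
    rw [← map_mul, toPGL2_mem_torus_iff, toPGL2_mem_torus_iff]
    rcases commute_toPGL2_iff.1 (Subgroup.mem_centralizer_singleton_iff.1 hb).symm with h | h
    · have hBS : A * (B * S) = -(B * S * A) := by
        rw [← mul_assoc, h.eq, mul_assoc, hS, mul_neg, mul_assoc]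
      exact .inr ⟨h, not_commute_of_mul_eq_neg_mul hBS⟩
    · have hBS : A * (B * S) = B * S * A := by
        rw [← mul_assoc, h, neg_mul, mul_assoc, hS, mul_neg, neg_neg, mul_assoc]
      exact .inl ⟨hBS, not_commute_of_mul_eq_neg_mul h⟩

end AnticommutingPairs

/-- A traceless matrix whose characteristic polynomial `X² + det A` has no root in `F`. -/
structure IsNonsplitTraceless (A : GL (Fin 2) F) : Prop where
  trace_eq_zero : A.val.trace = 0
  not_isSquare_neg_det : ¬ IsSquare (-A.val.det)

namespace IsNonsplitTraceless

variable {A : GL (Fin 2) F} (hA : IsNonsplitTraceless A)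

include hA

theorem fact_forall_sq_ne : Fact (∀ r : F, r ^ 2 ≠ -A.val.det + A.val.trace * r) :=
  ⟨fun r hr ↦ hA.not_isSquare_neg_det
    ⟨r, by rw [← sq, hr, hA.trace_eq_zero, zero_mul, add_zero]⟩⟩

theorem apply_one_one : A.val 1 1 = -A.val 0 0 :=
  eq_neg_of_add_eq_zero_right (by rw [← Matrix.trace_fin_two, hA.trace_eq_zero])

theorem apply_zero_one_mul_apply_one_zero_ne_zero : A.val 0 1 * A.val 1 0 ≠ 0 := by
  refine fun h ↦ hA.not_isSquare_neg_det ⟨A.val 0 0, ?_⟩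
  rw [Matrix.det_fin_two, h, hA.apply_one_one]
  ring

theorem exists_mul_eq_neg_mul : ∃ S : GL (Fin 2) F, A * S = -(S * A) := by
  refine ⟨.mkOfDetNeZero !![0, A.val 0 1; -A.val 1 0, 0] ?_, ?_⟩
  · simpa using hA.apply_zero_one_mul_apply_one_zero_ne_zero
  · ext i j
    fin_cases i <;> fin_cases j <;>
      simp [Matrix.mul_apply, Matrix.vecMul, dotProduct, GeneralLinearGroup.mkOfDetNeZero,
        hA.apply_one_one, mul_comm]

theorem eq_toPGL2_of_mem_torus [NeZero (2 : F)] {z : ProjectiveGL2 F} (hz : orderOf z = 2)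
    (hzA : z ∈ torus A) : z = toPGL2 A := by
  have := hA.fact_forall_sq_ne
  obtain ⟨B, rfl⟩ := toPGL2_surjective z
  obtain ⟨⟨u, v⟩, huv : u • 1 + v • A.val = B.val⟩ :=
    (commute_iff_mem_range_cayleyHamiltonHom notMem_range_scalar).1
      (Commute.units_val_iff.2 (toPGL2_mem_torus_iff.1 hzA))
  have u_eq_zero : u = 0 := by
    have trace_B := trace_eq_zero_of_orderOf_eq_two hz
    rw [← huv, Matrix.trace_add, Matrix.trace_smul, Matrix.trace_smul, hA.trace_eq_zero, smul_zero,
      add_zero, Matrix.trace_one, smul_eq_mul] at trace_B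
    exact (mul_eq_zero.1 trace_B).resolve_right (by simpa using two_ne_zero (α := F))
  have smul_eq : v • A.val = B.val := by rw [← huv, u_eq_zero, zero_smul, zero_add]
  have v_ne_zero : v ≠ 0 := fun h ↦ B.ne_zero (by rw [← smul_eq, h, zero_smul])
  exact (toPGL2_eq_iff.2 ⟨Units.mk0 v v_ne_zero, Units.ext smul_eq⟩).symm

variable [Fintype F] [NeZero (2 : F)]

theorem nonempty_centralizer_mulEquiv_dihedralGroup :
    Nonempty (Subgroup.centralizer {toPGL2 A} ≃* DihedralGroup (Fintype.card F + 1)) := by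
  have := hA.fact_forall_sq_ne
  obtain ⟨S, hS⟩ := hA.exists_mul_eq_neg_mul
  let e := Subgroup.subgroupOfEquivOfLe (torus_le_centralizer A)
  have := isCyclic_torus (A := A)
  have : IsCyclic ((torus A).subgroupOf (Subgroup.centralizer {toPGL2 A})) :=
    isCyclic_of_surjective e.symm e.symm.surjective
  rw [← card_torus (A := A), ← Nat.card_congr e.toEquiv]
  exact nonempty_mulEquiv_dihedralGroup_of_index_two (relIndex_torus_eq_two hS) fun g hg ↦
    Subtype.ext (mul_self_eq_one_of_mem_centralizer_of_notMem_torus g.2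
      (mt Subgroup.mem_subgroupOf.2 hg))

theorem natCard_centralizer :
    Nat.card (Subgroup.centralizer {toPGL2 A}) = 2 * (Fintype.card F + 1) := by
  obtain ⟨e⟩ := hA.nonempty_centralizer_mulEquiv_dihedralGroup
  rw [Nat.card_congr e.toEquiv, DihedralGroup.nat_card]

end IsNonsplitTraceless

theorem mem_torus_of_pow_eq {A : GL (Fin 2) F} {z : ProjectiveGL2 F} {m : ℕ}
    (hz : z ^ m = toPGL2 A) : z ∈ torus A := by
  obtain ⟨B, rfl⟩ := toPGL2_surjective z
  obtain ⟨c, rfl⟩ := toPGL2_eq_iff.1 ((map_pow toPGL2 B m).trans hz)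
  refine toPGL2_mem_torus_iff.2 (Commute.units_val_iff.1 ?_)
  exact (Commute.units_val_iff.2 (Commute.pow_self B m)).smul_left (c : F)

theorem pow_card_sub_one_eq_one_of_mem_torus [Fintype F] {A : GL (Fin 2) F} {r s : F}
    (hr : r * r = -A.val.det + A.val.trace * r) (hs : s * s = -A.val.det + A.val.trace * s)
    (hrs : r ≠ s) {z : ProjectiveGL2 F} (hz : z ∈ torus A)
    (hA : A.val ∉ Set.range (Matrix.scalar (Fin 2))) : z ^ (Fintype.card F - 1) = 1 := by
  obtain ⟨B, rfl⟩ := toPGL2_surjective z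
  obtain ⟨w, hw⟩ := (commute_iff_mem_range_cayleyHamiltonHom hA).1
    (Commute.units_val_iff.2 (toPGL2_mem_torus_iff.1 hz))
  have pow_card : B.val ^ Fintype.card F = B.val := by
    rw [← hw, ← map_pow, quadraticAlgebra_pow_card hr hs hrs]
  have B_pow : B ^ (Fintype.card F - 1) = 1 := by
    refine mul_right_cancel (b := B) ?_
    rw [← pow_succ, Nat.sub_add_cancel Fintype.card_pos, one_mul]
    exact Units.ext pow_card
  rw [← map_pow, B_pow, map_one]

/-- An element of order two of `PGL₂(F)` outside the image of `SL₂(F)`. -/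
structure IsOuterInvolution (x : ProjectiveGL2 F) : Prop where
  orderOf_eq_two : orderOf x = 2
  notMem_socleSL2 : x ∉ socleSL2 F

theorem IsOuterInvolution.exists_isNonsplitTraceless (hneg : IsSquare (-1 : F))
    {x : ProjectiveGL2 F} (hx : IsOuterInvolution x) :
    ∃ A : GL (Fin 2) F, IsNonsplitTraceless A ∧ toPGL2 A = x := by
  obtain ⟨A, rfl⟩ := toPGL2_surjective x
  refine ⟨A, ⟨trace_eq_zero_of_orderOf_eq_two hx.orderOf_eq_two, fun h ↦ ?_⟩, rfl⟩
  refine hx.notMem_socleSL2 (toPGL2_mem_socleSL2_iff.2 ?_)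
  simpa using hneg.mul h

theorem pow_card_sub_one_eq_one_of_pow_eq_inner [Fintype F] [NeZero (2 : F)]
    (hneg : IsSquare (-1 : F)) {r z : ProjectiveGL2 F} {m : ℕ} (hrz : r ^ m = z)
    (hz : orderOf z = 2) (hzS : z ∈ socleSL2 F) : r ^ (Fintype.card F - 1) = 1 := by
  obtain ⟨A, rfl⟩ := toPGL2_surjective z
  have trace_A := trace_eq_zero_of_orderOf_eq_two hz
  obtain ⟨e, he⟩ : IsSquare (-A.val.det) := by
    simpa using hneg.mul (toPGL2_mem_socleSL2_iff.1 hzS)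
  have e_ne_neg : e ≠ -e := by
    intro h
    have e_eq_zero : e = 0 :=
      (mul_eq_zero.1 (by linear_combination h : 2 * e = 0)).resolve_left two_ne_zero
    exact A.det_ne_zero (neg_eq_zero.1 (by rw [he, e_eq_zero, zero_mul]))
  have A_notMem : A.val ∉ Set.range (Matrix.scalar (Fin 2)) := fun h ↦ by
    simp [toPGL2_eq_one_iff.2 h] at hz
  refine pow_card_sub_one_eq_one_of_mem_torus ?_ ?_ e_ne_neg (mem_torus_of_pow_eq hrz) A_notMem
  · rw [trace_A, zero_mul, add_zero, he]
  · rw [trace_A, zero_mul, add_zero, he, neg_mul_neg]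

section FiniteField

variable [Fintype F] [NeZero (2 : F)]

namespace IsOuterInvolution

theorem nonempty_centralizer_mulEquiv_dihedralGroup (hneg : IsSquare (-1 : F))
    {x : ProjectiveGL2 F} (hx : IsOuterInvolution x) :
    Nonempty (Subgroup.centralizer {x} ≃* DihedralGroup (Fintype.card F + 1)) := by
  obtain ⟨A, hA, rfl⟩ := hx.exists_isNonsplitTraceless hneg
  exact hA.nonempty_centralizer_mulEquiv_dihedralGroup

omit [Fintype F] in
theorem eq_of_centralizer_eq [Finite F] (hneg : IsSquare (-1 : F)) {x y : ProjectiveGL2 F}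
    (hx : IsOuterInvolution x) (hy : IsOuterInvolution y)
    (hxy : Subgroup.centralizer {x} = Subgroup.centralizer {y}) : x = y := by
  obtain ⟨A, hA, rfl⟩ := hx.exists_isNonsplitTraceless hneg
  have hyC : y ∈ Subgroup.centralizer {toPGL2 A} := by
    rw [hxy, Subgroup.mem_centralizer_singleton_iff]
  refine (hA.eq_toPGL2_of_mem_torus hy.orderOf_eq_two ?_).symm
  by_contra hyT
  have := Fintype.ofFinite F
  have := hA.fact_forall_sq_ne
  have := isCyclic_torus (A := A)
  have sq_eq_one (t : torus A) : t ^ 2 = 1 := by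
    have htC := torus_le_centralizer A t.2
    have hty : Commute (t : ProjectiveGL2 F) y :=
      Subgroup.mem_centralizer_singleton_iff.1 (hxy.le htC)
    have htyT : (t : ProjectiveGL2 F) * y ∉ torus A := by
      rwa [(torus A).mul_mem_cancel_left t.2]
    have h := mul_self_eq_one_of_mem_centralizer_of_notMem_torus (mul_mem htC hyC) htyT
    rw [← sq, hty.mul_pow, (orderOf_eq_prime_iff.1 hy.orderOf_eq_two).1, mul_one] at h
    exact Subtype.ext h
  have card_dvd_two := Monoid.exponent_dvd_of_forall_pow_eq_one sq_eq_one
  rw [IsCyclic.exponent_eq_card, card_torus] at card_dvd_two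
  have := Nat.le_of_dvd two_pos card_dvd_two
  have := Fintype.one_lt_card (α := F)
  lia

theorem ncard_commuting (hneg : IsSquare (-1 : F)) {x : ProjectiveGL2 F}
    (hx : IsOuterInvolution x) :
    {z | IsOuterInvolution z ∧ z ∈ Subgroup.centralizer {x}}.ncard =
      1 + (Fintype.card F + 1) / 2 := by
  obtain ⟨A, hA, rfl⟩ := hx.exists_isNonsplitTraceless hneg
  have := hA.fact_forall_sq_ne
  let C := Subgroup.centralizer {toPGL2 A}
  have A_mem_torus : toPGL2 A ∈ torus A := toPGL2_mem_torus_iff.2 (Commute.refl A)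
  have eq_insert : {z | IsOuterInvolution z ∧ z ∈ C} =
      insert (toPGL2 A) (((C : Set (ProjectiveGL2 F)) \ torus A) \ socleSL2 F) := by
    ext z
    constructor
    · rintro ⟨hz, hzC⟩
      by_cases hzT : z ∈ torus A
      · exact .inl (hA.eq_toPGL2_of_mem_torus hz.orderOf_eq_two hzT)
      · exact .inr ⟨⟨hzC, hzT⟩, hz.notMem_socleSL2⟩
    · rintro (rfl | ⟨⟨hzC, hzT⟩, hzS⟩)
      · exact ⟨hx, torus_le_centralizer A A_mem_torus⟩
      · have hz := mul_self_eq_one_of_mem_centralizer_of_notMem_torus hzC hzT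
        have z_ne_one : z ≠ 1 := fun h ↦ hzT (h ▸ one_mem _)
        exact ⟨⟨orderOf_eq_prime (by rw [sq, hz]) z_ne_one, hzS⟩, hzC⟩
  have ncard_reflections : ((C : Set (ProjectiveGL2 F)) \ torus A).ncard = Fintype.card F + 1 := by
    rw [Set.ncard_sdiff (torus_le_centralizer A), ← Nat.card_coe_set_eq, ← Nat.card_coe_set_eq]
    change Nat.card C - Nat.card (torus A) = _
    rw [hA.natCard_centralizer, card_torus]
    lia
  have two_mul_ncard := two_mul_ncard_diff_of_index_two socleSL2_index hx.notMem_socleSL2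
    (Set.toFinite ((C : Set (ProjectiveGL2 F)) \ torus A)) fun w hw ↦
      ⟨mul_mem (torus_le_centralizer A A_mem_torus) hw.1,
        fun h ↦ hw.2 (((torus A).mul_mem_cancel_left A_mem_torus).1 h)⟩
  rw [eq_insert, Set.ncard_insert_of_notMem fun h ↦ h.1.2 A_mem_torus]
  lia

end IsOuterInvolution

theorem exists_isOuterInvolution_eq_centralizer (hneg : IsSquare (-1 : F))
    {H : Subgroup (ProjectiveGL2 F)} (hH : Nonempty (H ≃* DihedralGroup (Fintype.card F + 1))) :
    ∃ z, IsOuterInvolution z ∧ H = Subgroup.centralizer {z} := by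
  obtain ⟨e⟩ := hH
  obtain ⟨k, hk⟩ : 2 ∣ Fintype.card F + 1 := by
    have := FiniteField.odd_card_of_char_ne_two (ringChar_ne_two F)
    lia
  obtain ⟨r, orderOf_r, hr⟩ := exists_orderOf_eq_and_le_centralizer_pow (hk ▸ e)
  have orderOf_pow : orderOf (r ^ k) = 2 := by
    rw [orderOf_pow_of_dvd (by lia) (Dvd.intro_left 2 orderOf_r.symm), orderOf_r]
    exact Nat.mul_div_cancel _ (by lia)
  have isOuterInvolution_pow : IsOuterInvolution (r ^ k) := by
    refine ⟨orderOf_pow, fun h ↦ ?_⟩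
    have orderOf_dvd := orderOf_dvd_of_pow_eq_one
      (pow_card_sub_one_eq_one_of_pow_eq_inner hneg rfl orderOf_pow h)
    have := Fintype.one_lt_card (α := F)
    have := Nat.le_of_dvd (by lia) orderOf_dvd
    lia
  refine ⟨r ^ k, isOuterInvolution_pow, Subgroup.eq_of_le_of_card_ge hr ?_⟩
  obtain ⟨e'⟩ := isOuterInvolution_pow.nonempty_centralizer_mulEquiv_dihedralGroup hneg
  exact (Nat.card_congr (e'.trans e.symm).toEquiv).le

theorem setOf_dihedral_mem_eq_image_centralizer (hneg : IsSquare (-1 : F)) (x : ProjectiveGL2 F) :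
    {H : Subgroup (ProjectiveGL2 F) |
        Nonempty (H ≃* DihedralGroup (Fintype.card F + 1)) ∧ x ∈ H} =
      (fun z ↦ Subgroup.centralizer {z}) ''
        {z | IsOuterInvolution z ∧ z ∈ Subgroup.centralizer {x}} := by
  have mem_comm (z : ProjectiveGL2 F) :
      z ∈ Subgroup.centralizer {x} ↔ x ∈ Subgroup.centralizer {z} := by
    rw [Subgroup.mem_centralizer_singleton_iff, Subgroup.mem_centralizer_singleton_iff, eq_comm]
  ext H
  constructor
  · rintro ⟨hH, hxH⟩
    obtain ⟨z, hz, rfl⟩ := exists_isOuterInvolution_eq_centralizer hneg hH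
    exact ⟨z, ⟨hz, (mem_comm z).2 hxH⟩, rfl⟩
  · rintro ⟨z, ⟨hz, hzx⟩, rfl⟩
    exact ⟨hz.nonempty_centralizer_mulEquiv_dihedralGroup hneg, (mem_comm z).1 hzx⟩

end FiniteField

end ProjectiveGL2

theorem pow_two_pow_mod_four {p n : ℕ} (hp : Odd p) (hn : n ≠ 0) : p ^ 2 ^ n % 4 = 1 := by
  obtain ⟨m, rfl⟩ := Nat.exists_eq_succ_of_ne_zero hn
  have := Int.sq_mod_four_eq_one_of_odd (x := (p ^ 2 ^ m : ℕ)) (by exact_mod_cast hp.pow)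
  rw [pow_succ, pow_mul]
  exact_mod_cast this

open ProjectiveGL2 in
theorem count_dihedral_2q_plus_2_containing_outer_involution_general (F : Type) [Field F]
    [Fintype F] (hF : Fintype.card F % 4 = 1) (x : ProjectiveGL2 F) (hx : orderOf x = 2)
    (hxS : x ∉ socleSL2 F) :
    {H : Subgroup (ProjectiveGL2 F) |
        Nonempty (H ≃* DihedralGroup (Fintype.card F + 1)) ∧ x ∈ H}.ncard
      = 1 + (Fintype.card F + 1) / 2 ∧
    Subgroup.centralizer {x} ∈ {H : Subgroup (ProjectiveGL2 F) |
        Nonempty (H ≃* DihedralGroup (Fintype.card F + 1)) ∧ x ∈ H} := by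
  have hneg : IsSquare (-1 : F) := FiniteField.isSquare_neg_one_iff.2 (by lia)
  have : NeZero (2 : F) := ⟨Ring.two_ne_zero fun h ↦ by
    have := FiniteField.even_card_iff_char_two.1 h
    lia⟩
  have hx' : IsOuterInvolution x := ⟨hx, hxS⟩
  refine ⟨?_, hx'.nonempty_centralizer_mulEquiv_dihedralGroup hneg,
    Subgroup.mem_centralizer_singleton_iff.2 rfl⟩
  have centralizer_injOn : Set.InjOn (fun z : ProjectiveGL2 F ↦ Subgroup.centralizer {z})
      {z | IsOuterInvolution z ∧ z ∈ Subgroup.centralizer {x}} :=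
    fun y hy z hz ↦ hy.1.eq_of_centralizer_eq hneg hz.1
  rw [setOf_dihedral_mem_eq_image_centralizer hneg, centralizer_injOn.ncard_image,
    hx'.ncard_commuting hneg]

/-- An outer involution `x` of `PGL₂(q)` lies in exactly `1 + (q+1)/2` subgroups
isomorphic to the dihedral group of order `2(q+1)`, one of which is its centralizer. -/
theorem count_dihedral_2q_plus_2_containing_outer_involution (p n : ℕ) (hp : Nat.Prime p) (hodd : Odd p) (hn : 1 ≤ n)
    (F : Type) [Field F] [Fintype F] (hF : Fintype.card F = p ^ 2 ^ n)
    (x : ProjectiveGL2 F) (hx : orderOf x = 2) (hxS : x ∉ socleSL2 F) :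
    {H : Subgroup (ProjectiveGL2 F) |
        Nonempty (H ≃* DihedralGroup (p ^ 2 ^ n + 1)) ∧ x ∈ H}.ncard
      = 1 + (p ^ 2 ^ n + 1) / 2 ∧
    Subgroup.centralizer {x} ∈ {H : Subgroup (ProjectiveGL2 F) |
        Nonempty (H ≃* DihedralGroup (p ^ 2 ^ n + 1)) ∧ x ∈ H} :=
  hF ▸ count_dihedral_2q_plus_2_containing_outer_involution_general F
    (hF ▸ pow_two_pow_mod_four hodd (by lia)) x hx hxS
end
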